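/- arXiv:math/0302037 — 3 statements merged into one kernel-verified Lean document; each statement's English description precedes it below -/
import Mathlib

section
/- The map π ↦ (A_n(π), B_n(π)) is a bijection from W_n onto the set of all pairs of n-standard bitableaux having the same shape. -/
open scoped Classical

noncomputable section

/-! ## The hyperoctahedral group `W_n` as signed permutations of `I_n ⊆ ℤ` -/

abbrev P := Equiv.Perm ℤ

/-- `W_n` : permutations of `I_n = {±1, …, ±n}` commuting with `i ↦ -i`,
realized as permutations of `ℤ` fixing everything outside `I_n`. -/
def Wset (n : ℕ) : Set P :=
  {π | (∀ i : ℤ, π (-i) = - π i) ∧ ∀ i : ℤ, (n : ℤ) < |i| → π i = i}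

/-- the generator `t = (1, -1)` -/
def tgen : P := Equiv.swap 1 (-1)

/-- the generator `s_i = (i, i+1)(-i, -(i+1))` -/
def sgen (i : ℕ) : P :=
  Equiv.swap (i : ℤ) ((i : ℤ) + 1) * Equiv.swap (-(i : ℤ)) (-((i : ℤ) + 1))

/-- the generating set `S_n = {t, s_1, …, s_{n-1}}` -/
def Sset (n : ℕ) : Set P := insert tgen (sgen '' Set.Icc 1 (n - 1))

/-- the length function of `W_n` with respect to `S_n` -/
def len (n : ℕ) (w : P) : ℕ :=
  sInf {k | ∃ l : List P, (∀ g ∈ l, g ∈ Sset n) ∧ l.prod = w ∧ l.length = k}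

/-- number of occurrences of `tgen` in a list -/
def tcount (l : List P) : ℕ := (l.map (fun g => if g = tgen then 1 else 0)).sum

/-- `ℓ_t(w)` : the number of occurrences of `t` in a (any) reduced expression of `w` -/
def tlen (n : ℕ) (w : P) : ℕ :=
  sInf {k | ∃ l : List P, (∀ g ∈ l, g ∈ Sset n) ∧ l.prod = w ∧
    l.length = len n w ∧ tcount l = k}

/-- the Bruhat order on `W_n` : `x ≤ y` iff some reduced expression of `y`
has a subword whose product is `x`. -/
def bruhat (n : ℕ) (x y : P) : Prop :=
  ∃ l l' : List P, (∀ g ∈ l, g ∈ Sset n) ∧ l.prod = y ∧ l.length = len n y ∧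
    List.Sublist l' l ∧ l'.prod = x

/-! ## Generalized Robinson–Schensted correspondence -/

abbrev Tab := List (List ℕ)

/-- row insertion of `x` into one row; returns the new row and the bumped entry (if any) -/
def insRow (x : ℕ) : List ℕ → List ℕ × Option ℕ
  | [] => ([x], none)
  | y :: ys =>
    if x < y then (x :: ys, some y)
    else
      let p := insRow x ys
      (y :: p.1, p.2)

/-- Schensted insertion of `x` into a tableau; returns the new tableau
and the (row, column) coordinates of the newly created box. -/
def insTab (x : ℕ) : Tab → Tab × ℕ × ℕ
  | [] => ([[x]], 0, 0)
  | row :: rest =>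
    let p := insRow x row
    match p.2 with
    | none => (p.1 :: rest, 0, row.length)
    | some b =>
      let q := insTab b rest
      (p.1 :: q.1, q.2.1 + 1, q.2.2)

/-- place the label `lbl` at the end of row `pos.1` of the recording tableau -/
def place (lbl : ℕ) (pos : ℕ × ℕ) (T : Tab) : Tab :=
  if pos.1 < T.length then T.set pos.1 ((T.getD pos.1 []) ++ [lbl]) else T ++ [[lbl]]

/-- one step of the generalized RS algorithm: insert `|π(i)|` into `A⁺` or `A⁻`
according to the sign of `π(i)`, and record `i` in the corresponding `B`-tableau. -/
def RSstep (π : P) (st : (Tab × Tab) × (Tab × Tab)) (i : ℕ) : (Tab × Tab) × (Tab × Tab) :=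
  let v := (π (i : ℤ)).natAbs
  if 0 < π (i : ℤ) then
    let p := insTab v st.1.1
    ((p.1, st.1.2), (place i p.2 st.2.1, st.2.2))
  else
    let p := insTab v st.1.2
    ((st.1.1, p.1), (st.2.1, place i p.2 st.2.2))

def RSfull (n : ℕ) (π : P) : (Tab × Tab) × (Tab × Tab) :=
  (((List.range n).map (· + 1)).foldl (RSstep π)) ((([], []), ([], [])))

/-- the insertion bitableau `A_n(π) = (A⁺, A⁻)` -/
def Atab (n : ℕ) (π : P) : Tab × Tab := (RSfull n π).1

/-- the recording bitableau `B_n(π) = (B⁺, B⁻)` -/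
def Btab (n : ℕ) (π : P) : Tab × Tab := (RSfull n π).2

/-- `T` is a standard Young tableau -/
def IsStdTab (T : Tab) : Prop :=
  (∀ row ∈ T, row ≠ [] ∧ row.Chain' (· < ·)) ∧
  T.Chain' (fun r1 r2 => r2.length ≤ r1.length) ∧
  ∀ i j : ℕ, i + 1 < T.length → j < (T.getD (i + 1) []).length →
    (T.getD i []).getD j 0 < (T.getD (i + 1) []).getD j 0

/-- `(T₁, T₂)` is an `n`-standard bitableau: both standard, entry sets disjoint
with union `{1, …, n}` -/
def IsNStdBitab (n : ℕ) (p : Tab × Tab) : Prop :=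
  IsStdTab p.1 ∧ IsStdTab p.2 ∧ (p.1.flatten ++ p.2.flatten).Perm (List.range' 1 n)

/-- the shape of a bitableau -/
def shape2 (p : Tab × Tab) : List ℕ × List ℕ := (p.1.map List.length, p.2.map List.length)

/-! ## Knuth relations -/

/-- `t_i = (i, -i)` -/
def ttgen (i : ℕ) : P := Equiv.swap (i : ℤ) (-(i : ℤ))

/-- `S'_n = S_n ∪ {t_1, …, t_n}` -/
def Sprime (n : ℕ) : Set P := Sset n ∪ (ttgen '' Set.Icc 1 n)

/-- the extended left descent set `L'(w)` -/
def Ldesc (n : ℕ) (w : P) : Set P := {u ∈ Sprime n | len n (u * w) < len n w}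

/-- the elementary relation `x —s→ y` -/
def knuthStep (n : ℕ) (x y : P) : Prop :=
  ∃ i ∈ Set.Icc 1 (n - 1), y = sgen i * x ∧ len n x < len n y ∧
    ¬ (Ldesc n x ⊆ Ldesc n y)

/-- the relation `x ↔_L y` -/
def knuthRel (n : ℕ) : P → P → Prop :=
  Relation.ReflTransGen (fun a b => knuthStep n a b ∨ knuthStep n b a)

/-! ## Parabolic subgroups, coset representatives and the decomposition -/

/-- the parabolic subgroup `𝔖_n = ⟨s_1, …, s_{n-1}⟩` -/
def SymN (n : ℕ) : Subgroup P := Subgroup.closure (sgen '' Set.Icc 1 (n - 1))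

/-- the parabolic subgroup `𝔖_{l, n-l} = ⟨{s_1, …, s_{n-1}} \ {s_l}⟩` -/
def SymLR (n l : ℕ) : Subgroup P :=
  Subgroup.closure (sgen '' {i | 1 ≤ i ∧ i ≤ n - 1 ∧ i ≠ l})

/-- `Y_{l, n-l}` : minimal length representatives of left cosets of `𝔖_{l,n-l}` in `𝔖_n` -/
def Yset (n l : ℕ) : Set P :=
  {w | w ∈ SymN n ∧ ∀ u ∈ SymLR n l, len n w ≤ len n (w * u)}

/-- `X_n` : minimal length representatives of the left cosets `w 𝔖_n` in `W_n` -/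
def Xset (n : ℕ) : Set P :=
  {w | w ∈ Wset n ∧ ∀ u ∈ SymN n, len n w ≤ len n (w * u)}

/-- `X_n^{(l)}` -/
def Xl (n l : ℕ) : Set P := {w ∈ Xset n | tlen n w = l}

/-- `r_1 = t`, `r_{i+1} = s_i r_i` -/
def rgen : ℕ → P
  | 0 => 1
  | 1 => tgen
  | (i + 2) => sgen (i + 1) * rgen (i + 1)

/-- `a_l = r_1 r_2 ⋯ r_l` -/
def al (l : ℕ) : P := ((List.range l).map (fun k => rgen (k + 1))).prod

/-- the set `X_n^{(l)} ⬝ 𝔖_{l, n-l}` -/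
def XSset (n l : ℕ) : Set P := Set.image2 (· * ·) (Xl n l) (SymLR n l : Set P)

/-- `w = a ⬝ a_l ⬝ σ ⬝ b⁻¹` is the canonical decomposition of `w`
(with `a, b ∈ Y_{l,n-l}`, `σ ∈ 𝔖_{l,n-l}` and additivity of lengths) -/
def IsDecomp (n l : ℕ) (w a σ b : P) : Prop :=
  a ∈ Yset n l ∧ b ∈ Yset n l ∧ σ ∈ SymLR n l ∧ w = a * al l * σ * b⁻¹ ∧
    len n w = len n a + len n (al l) + len n σ + len n b

/-- the relation `w ⇝_L w'` -/
def squig (n : ℕ) (w w' : P) : Prop :=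
  ∃ l a σ b a' σ', tlen n w = l ∧ tlen n w' = l ∧
    IsDecomp n l w a σ b ∧ IsDecomp n l w' a' σ' b ∧ knuthRel n σ σ'

/-! ## The two-parameter Iwahori–Hecke algebra and Kazhdan–Lusztig data -/

/-- the ring `A = ℤ[V^{±1}, v^{±1}]`, as the group algebra of `Γ = ℤ × ℤ`
(a monomial `V^i v^j` corresponds to `(i,j) ∈ ℤ × ℤ`). -/
abbrev RR := AddMonoidAlgebra ℤ (ℤ × ℤ)

/-- the monomial with exponent `g` -/
def mono (g : ℤ × ℤ) : RR := AddMonoidAlgebra.single g 1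

/-- `Γ₋` for the lexicographic order with `V ≫ v`: `V^i v^j < 1` -/
def Gneg (g : ℤ × ℤ) : Prop := g.1 < 0 ∨ (g.1 = 0 ∧ g.2 < 0)

/-- an element of `ℤ[Γ₋]` : all monomials lie in `Γ₋` -/
def inNeg (f : RR) : Prop := ∀ g ∈ f.coeff.support, Gneg g

/-- the bar involution of `A`, `V ↦ V⁻¹`, `v ↦ v⁻¹` -/
def barR : RR → RR := fun f => .ofCoeff (Finsupp.equivMapDomain (Equiv.neg (ℤ × ℤ)) f.coeff)

/-- the parameter `v_s` of a generator (`v_t = V`, `v_{s_i} = v`) -/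
def vgen (g : P) : RR := if g = tgen then mono (1, 0) else mono (0, 1)

/-- the inverse `v_s⁻¹` of the parameter of a generator -/
def vgenInv (g : P) : RR := if g = tgen then mono (-1, 0) else mono (0, -1)

/-- the free `A`-module with basis indexed by permutations; the Hecke algebra
`H_n` is carried by the elements supported on `W_n`. -/
abbrev HH := P →₀ RR

/-- the standard basis element `T_w` -/
def TT (w : P) : HH := Finsupp.single w 1

/-- All the data attached to the Iwahori–Hecke algebra `H_n` of `W_n` over
`A = ℤ[V^{±1}, v^{±1}]`: the multiplication, the bar involution, the
Kazhdan–Lusztig basis `C_w = Σ_y P*_{y,w} T_y` (for the order on `Γ` given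
by `Γ₊ = {V^i v^j : i > 0} ∪ {v^j : j > 0}`), and Lusztig's `M`-polynomials,
together with their defining properties. -/
structure KLData (n : ℕ) where
  mul : HH → HH → HH
  mul_add_left : ∀ a b c, mul (a + b) c = mul a c + mul b c
  mul_add_right : ∀ a b c, mul a (b + c) = mul a b + mul a c
  mul_smul_left : ∀ (r : RR) a b, mul (r • a) b = r • mul a b
  mul_smul_right : ∀ (r : RR) a b, mul a (r • b) = r • mul a b
  mul_assoc : ∀ a b c, mul (mul a b) c = mul a (mul b c)
  one_mul : ∀ a, mul (TT 1) a = a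
  mul_one : ∀ a, mul a (TT 1) = a
  /-- `T_w T_{w'} = T_{w w'}` when lengths add -/
  T_mul : ∀ w w', w ∈ Wset n → w' ∈ Wset n →
    len n (w * w') = len n w + len n w' → mul (TT w) (TT w') = TT (w * w')
  /-- the quadratic relations `T_s² = T_1 + (v_s - v_s⁻¹) T_s` -/
  T_sq : ∀ g ∈ Sset n, mul (TT g) (TT g) = TT 1 + (vgen g - vgenInv g) • TT g
  bar : HH → HH
  bar_add : ∀ a b, bar (a + b) = bar a + bar b
  bar_smul : ∀ (r : RR) a, bar (r • a) = barR r • bar a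
  bar_mul : ∀ a b, bar (mul a b) = mul (bar a) (bar b)
  /-- `bar T_s = T_s⁻¹ = T_s + (v_s⁻¹ - v_s) T_1` -/
  bar_gen : ∀ g ∈ Sset n, bar (TT g) = TT g + (vgenInv g - vgen g) • TT 1
  /-- the Kazhdan–Lusztig basis element `C_w`, whose coordinate at `T_y` is
  the polynomial `P*_{y,w}` -/
  C : P → HH
  /-- `P*_{w,w} = 1` -/
  C_self : ∀ w, C w w = 1
  /-- `P*_{y,w} = 0` unless `y ≤ w` -/
  C_supp : ∀ w y, C w y ≠ 0 → bruhat n y w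
  /-- `P*_{y,w} ∈ ℤ[Γ₋]` for `y < w` -/
  C_neg : ∀ w y, y ≠ w → inNeg (C w y)
  /-- `C_w` is bar-invariant -/
  C_bar : ∀ w, w ∈ Wset n → bar (C w) = C w
  /-- `M s w` is the finitely supported family `z ↦ M^s_{z,w}` -/
  M : P → P → (P →₀ RR)
  M_supp : ∀ s w z, (M s w) z ≠ 0 → bruhat n z w ∧ z ≠ w ∧ len n (s * z) < len n z
  /-- the symmetry condition `bar M^s_{y,w} = M^s_{y,w}` -/
  M_bar : ∀ s w z, barR ((M s w) z) = (M s w) z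
  /-- the condition `M^s_{y,w} + Σ_{y<z<w, sz<z} P*_{y,z} M^s_{z,w} - v_s P*_{y,w} ∈ ℤ[Γ₋]` -/
  M_cond : ∀ s ∈ Sset n, ∀ y w, len n (s * y) < len n y → len n w < len n (s * w) →
    bruhat n y w → y ≠ w →
    inNeg ((M s w) y + (M s w).sum (fun z m => if z = y then 0 else C z y * m)
      - vgen s * C w y)
  /-- `C_s C_w = C_{sw} + Σ_{z<w, sz<z} M^s_{z,w} C_z` when `sw > w` -/
  mulC_up : ∀ s ∈ Sset n, ∀ w ∈ Wset n, len n w < len n (s * w) →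
    mul (C s) (C w) = C (s * w) + (M s w).sum (fun z m => m • C z)
  /-- `C_s C_w = (v_s + v_s⁻¹) C_w` when `sw < w` -/
  mulC_down : ∀ s ∈ Sset n, ∀ w ∈ Wset n, len n (s * w) < len n w →
    mul (C s) (C w) = (vgen s + vgenInv s) • C w

/-- `P_{y,w} = v_y⁻¹ v_w P*_{y,w}` -/
def Ppoly (n : ℕ) (D : KLData n) (y w : P) : RR :=
  mono ((tlen n w : ℤ) - (tlen n y : ℤ),
        ((len n w : ℤ) - (tlen n w : ℤ)) - ((len n y : ℤ) - (tlen n y : ℤ))) * D.C w y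

/-- the `R`-polynomials : `bar T_w = Σ_y R_{y,w} T_y` -/
def Rpoly {n : ℕ} (D : KLData n) (y w : P) : RR := (D.bar (TT w)) y

/-- `y ≤_{L,s} w` : `C_y` occurs with non-zero coefficient in `C_s C_w`
(expressed in the `C`-basis), for some `s ∈ S_n`, `y ≠ w` -/
def leLelem {n : ℕ} (D : KLData n) (y w : P) : Prop :=
  ∃ s ∈ Sset n, len n w < len n (s * w) ∧ (y = s * w ∨ (D.M s w) y ≠ 0)

/-- the preorder `≤_L` -/
def leL {n : ℕ} (D : KLData n) : P → P → Prop := Relation.ReflTransGen (leLelem D)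

/-- the equivalence `∼_L`; its classes are the left cells -/
def simL {n : ℕ} (D : KLData n) (y w : P) : Prop := leL D y w ∧ leL D w y

/-- `f` is a polynomial in `q = v²` -/
def isPolyInQ (f : RR) : Prop := ∀ g ∈ f.coeff.support, g.1 = 0 ∧ 0 ≤ g.2 ∧ 2 ∣ g.2

end
/-! ### Recursive versions of the tableau notions -/

namespace GRS

/-- entrywise strict domination of the row `s` by the (longer) row `r` above it -/
def Dom : List ℕ → List ℕ → Prop
  | _, [] => True
  | [], _ :: _ => False
  | a :: r, b :: s => a < b ∧ Dom r s

@[simp] theorem dom_nil (r : List ℕ) : Dom r [] := by cases r <;> simp [Dom]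
@[simp] theorem dom_nil_cons (b : ℕ) (s : List ℕ) : ¬ Dom [] (b :: s) := by simp [Dom]
@[simp] theorem dom_cons (a b : ℕ) (r s : List ℕ) :
    Dom (a :: r) (b :: s) ↔ a < b ∧ Dom r s := by simp [Dom]

theorem dom_iff (r s : List ℕ) :
    Dom r s ↔ s.length ≤ r.length ∧ ∀ j, j < s.length → r.getD j 0 < s.getD j 0 := by
  induction s generalizing r with
  | nil => simp
  | cons b s ih =>
    cases r with
    | nil => simp
    | cons a r =>
      rw [dom_cons, ih]
      constructor
      · rintro ⟨h1, h2, h3⟩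
        refine ⟨by simpa using h2, ?_⟩
        intro j hj
        cases j with
        | zero => simpa using h1
        | succ j => simpa using h3 j (by simpa using hj)
      · rintro ⟨h2, h3⟩
        refine ⟨by simpa using h3 0 (by simp), by simpa using h2, ?_⟩
        intro j hj
        simpa using h3 (j + 1) (by simpa using hj)

/-- recursive version of `IsStdTab` -/
def STab : Tab → Prop
  | [] => True
  | row :: rest => row ≠ [] ∧ row.Pairwise (· < ·) ∧ Dom row (rest.headD []) ∧ STab rest

@[simp] theorem sTab_nil : STab [] := by simp [STab]
@[simp] theorem sTab_cons (row : List ℕ) (rest : Tab) : STab (row :: rest) ↔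
    row ≠ [] ∧ row.Pairwise (· < ·) ∧ Dom row (rest.headD []) ∧ STab rest := by simp [STab]

theorem isStdTab_iff (T : Tab) : IsStdTab T ↔ STab T := by
  induction T with
  | nil => simp [IsStdTab, List.Chain']
  | cons row rest ih =>
    rw [sTab_cons, ← ih, dom_iff]
    unfold IsStdTab List.Chain'
    constructor
    · rintro ⟨h1, h2, h3⟩
      refine ⟨(h1 row (by simp)).1, List.isChain_iff_pairwise.1 (h1 row (by simp)).2, ?_,
        fun r hr => h1 r (by simp [hr]), ?_, ?_⟩
      · cases rest with
        | nil => simp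
        | cons r2 rest =>
          refine ⟨?_, ?_⟩
          · simp at h2
            simpa using h2.1
          · intro j hj
            simpa using h3 0 j (by simp) (by simpa using hj)
      · exact h2.tail
      · intro i j hi hj
        simpa using h3 (i + 1) j (by simpa using hi) (by simpa using hj)
    · rintro ⟨h1, h2, h3, h4, h5, h6⟩
      refine ⟨?_, ?_, ?_⟩
      · intro r hr
        rcases List.mem_cons.1 hr with rfl | hr
        · exact ⟨h1, List.isChain_iff_pairwise.2 h2⟩
        · exact h4 r hr
      · cases rest with
        | nil => simp
        | cons r2 rest =>
          rw [List.isChain_cons_cons]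
          exact ⟨by simpa using h3.1, h5⟩
      · intro i j hi hj
        cases i with
        | zero =>
          cases rest with
          | nil => simp at hi
          | cons r2 rest => simpa using h3.2 j (by simpa using hj)
        | succ i => simpa using h6 i j (by simpa using hi) (by simpa using hj)

/-! ### Elementary facts on domination -/

theorem dom_length {r s : List ℕ} (h : Dom r s) : s.length ≤ r.length := ((dom_iff _ _).1 h).1

theorem dom_append_left {r s : List ℕ} (x : ℕ) (h : Dom r s) : Dom (r ++ [x]) s := by
  induction r generalizing s with
  | nil => cases s <;> simp_all
  | cons a r ih =>
    cases s with
    | nil => simp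
    | cons b s => simp at h ⊢; exact ⟨h.1, ih h.2⟩

theorem dom_of_append_left {r s : List ℕ} {x : ℕ} (h : Dom (r ++ [x]) s)
    (hl : s.length ≤ r.length) : Dom r s := by
  induction r generalizing s with
  | nil => cases s <;> simp_all
  | cons a r ih =>
    cases s with
    | nil => simp
    | cons b s => simp at h hl ⊢; exact ⟨h.1, ih h.2 hl⟩

theorem dom_of_append_left_max {r s : List ℕ} {x : ℕ} (h : Dom (r ++ [x]) s)
    (hl : ∀ y ∈ s, y ≤ x) : Dom r s := by
  induction r generalizing s with
  | nil =>
    cases s with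
    | nil => simp
    | cons b s => simp at h hl; omega
  | cons a r ih =>
    cases s with
    | nil => simp
    | cons b s => simp at h hl ⊢; exact ⟨h.1, ih h.2 hl.2⟩

theorem dom_of_append_right {r s : List ℕ} {x : ℕ} (h : Dom r (s ++ [x])) : Dom r s := by
  induction r generalizing s with
  | nil => cases s <;> simp_all
  | cons a r ih =>
    cases s with
    | nil => simp
    | cons b s => simp at h ⊢; exact ⟨h.1, ih h.2⟩

theorem dom_append_right {r s : List ℕ} {x : ℕ} (h : Dom r s) (hl : s.length < r.length)
    (hx : ∀ y ∈ r, y < x) : Dom r (s ++ [x]) := by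
  induction r generalizing s with
  | nil => simp at hl
  | cons a r ih =>
    cases s with
    | nil => simpa using hx a (by simp)
    | cons b s =>
      simp at h hl ⊢
      exact ⟨h.1, ih h.2 hl (fun y hy => hx y (by simp [hy]))⟩

/-! ### Row insertion -/

theorem insRow_perm (x : ℕ) (row : List ℕ) :
    ((insRow x row).1 ++ (insRow x row).2.toList).Perm (x :: row) := by
  induction row with
  | nil => simp [insRow]
  | cons y ys ih =>
    rw [insRow]
    split
    · simpa using (List.perm_append_comm (l₁ := ys) (l₂ := [y])).cons x
    · simpa using (ih.cons y).trans (List.Perm.swap x y ys)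

theorem insRow_none {x : ℕ} {row : List ℕ} (h : (insRow x row).2 = none) :
    (insRow x row).1 = row ++ [x] := by
  induction row with
  | nil => simp [insRow]
  | cons y ys ih =>
    rw [insRow] at h ⊢
    split at h
    · simp at h
    · rename_i hxy
      simp [hxy]
      exact ih h

theorem insRow_append {x : ℕ} {row : List ℕ} (h : ∀ y ∈ row, y < x) :
    insRow x row = (row ++ [x], none) := by
  induction row with
  | nil => simp [insRow]
  | cons y ys ih =>
    rw [insRow, if_neg (by have := h y (by simp); omega), ih (fun z hz => h z (by simp [hz]))]
    simp

theorem insRow_some_length {x b : ℕ} {row : List ℕ} (h : (insRow x row).2 = some b) :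
    (insRow x row).1.length = row.length := by
  have := (insRow_perm x row).length_eq
  simp [h] at this
  exact this

theorem insRow_some_lt {x b : ℕ} {row : List ℕ} (h : (insRow x row).2 = some b) :
    x < b ∧ b ∈ row := by
  induction row with
  | nil => simp [insRow] at h
  | cons y ys ih =>
    rw [insRow] at h
    split at h
    · simp at h; subst h; simpa
    · have := ih h
      exact ⟨this.1, by simp [this.2]⟩

theorem insRow_mem (x : ℕ) (row : List ℕ) : x ∈ (insRow x row).1 := by
  induction row with
  | nil => simp [insRow]
  | cons y ys ih =>
    rw [insRow]
    split
    · simp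
    · simp [ih]

theorem insRow_ne_nil (x : ℕ) (row : List ℕ) : (insRow x row).1 ≠ [] :=
  List.ne_nil_of_mem (insRow_mem x row)

theorem insRow_mem_or {x y : ℕ} {row : List ℕ} (h : y ∈ (insRow x row).1) : y = x ∨ y ∈ row := by
  have := (insRow_perm x row).subset (List.mem_append_left _ h)
  simpa using this

theorem insRow_sorted {x : ℕ} {row : List ℕ} (h : row.Pairwise (· < ·)) (hx : x ∉ row) :
    (insRow x row).1.Pairwise (· < ·) := by
  induction row with
  | nil => simp [insRow]
  | cons y ys ih =>
    rw [List.pairwise_cons] at h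
    simp at hx
    rw [insRow]
    split
    · rename_i hxy
      simp only [List.pairwise_cons]
      exact ⟨fun z hz => hxy.trans (h.1 z hz), h.2⟩
    · simp only [List.pairwise_cons]
      refine ⟨fun z hz => ?_, ih h.2 hx.2⟩
      rcases insRow_mem_or hz with rfl | hz
      · omega
      · exact h.1 z hz

theorem dom_insRow {x : ℕ} {r s : List ℕ} (h : Dom r s) : Dom (insRow x r).1 s := by
  induction r generalizing s with
  | nil => cases s <;> simp_all
  | cons a r ih =>
    cases s with
    | nil => simp
    | cons b s =>
      simp at h
      rw [insRow]
      split
      · simp; exact ⟨by omega, h.2⟩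
      · simp; exact ⟨h.1, ih h.2⟩

theorem dom_insRow_insRow {x b : ℕ} {r s : List ℕ} (h : Dom r s) (hr : r.Pairwise (· < ·))
    (hb : (insRow x r).2 = some b) : Dom (insRow x r).1 (insRow b s).1 := by
  induction r generalizing s with
  | nil => simp [insRow] at hb
  | cons y ys ih =>
    rw [List.pairwise_cons] at hr
    rw [insRow] at hb ⊢
    by_cases hxy : x < y
    · simp [hxy] at hb ⊢
      subst hb
      cases s with
      | nil => simpa [insRow] using hxy
      | cons z zs =>
        simp at h
        simp [insRow, h.1, hxy, h.2]
    · simp [hxy] at hb ⊢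
      have hyb := hr.1 b (insRow_some_lt hb).2
      cases s with
      | nil => simpa [insRow] using hyb
      | cons z zs =>
        simp at h
        rw [insRow]
        split
        · simp [hyb]; exact dom_insRow h.2
        · simp [h.1]; exact ih h.2 hr.2 hb

theorem insRow_inj {x x' b : ℕ} {r r' : List ℕ} (hr : r.Pairwise (· < ·))
    (hr' : r'.Pairwise (· < ·)) (hx : x ∉ r) (hx' : x' ∉ r')
    (h1 : (insRow x r).1 = (insRow x' r').1) (hb : (insRow x r).2 = some b)
    (hb' : (insRow x' r').2 = some b) : x = x' ∧ r = r' := by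
  induction r generalizing r' with
  | nil => simp [insRow] at hb
  | cons y ys ih =>
    cases r' with
    | nil => simp [insRow] at hb'
    | cons z zs =>
      rw [List.pairwise_cons] at hr hr'
      simp at hx hx'
      rw [insRow] at hb h1
      rw [insRow] at hb' h1
      by_cases hxy : x < y <;> by_cases hxz : x' < z
      · simp_all
      · simp [hxy, hxz] at hb hb' h1
        have h2 := insRow_mem x' zs
        rw [← h1.2] at h2
        have := hr.1 _ h2
        have := (insRow_some_lt hb').1
        omega
      · simp [hxy, hxz] at hb hb' h1
        have h2 := insRow_mem x ys
        rw [h1.2] at h2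
        have := hr'.1 _ h2
        have := (insRow_some_lt hb).1
        omega
      · simp [hxy, hxz] at hb hb' h1
        have := ih hr.2 hr'.2 hx.2 hx'.2 h1.2 hb hb'
        simp [this, h1.1]

/-! ### Reverse row insertion -/

def revRow (b : ℕ) : List ℕ → List ℕ × ℕ
  | [] => ([], b)
  | [y] => ([b], y)
  | y :: z :: zs =>
    if z < b then (y :: (revRow b (z :: zs)).1, (revRow b (z :: zs)).2) else (b :: z :: zs, y)

theorem revRow_cases (b y : ℕ) (ys : List ℕ) :
    (revRow b (y :: ys) = (b :: ys, y) ∧ ∀ z ∈ ys.head?, ¬ z < b) ∨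
    ∃ z zs, ys = z :: zs ∧ z < b ∧ revRow b (y :: ys) = (y :: (revRow b ys).1, (revRow b ys).2) := by
  cases ys with
  | nil => simp [revRow]
  | cons z zs =>
    by_cases h : z < b
    · right; exact ⟨z, zs, rfl, h, by simp [revRow, h]⟩
    · left; simp [revRow, h]; omega

theorem revRow_mem {b : ℕ} {row : List ℕ} (h : row ≠ []) :
    (revRow b row).2 ∈ row ∧ ∀ z ∈ (revRow b row).1, z = b ∨ z ∈ row := by
  induction row with
  | nil => simp at h
  | cons y ys ih =>
    rcases revRow_cases b y ys with ⟨h1, h2⟩ | ⟨z, zs, h0, h1, h2⟩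
    · rw [h1]; simp; tauto
    · rw [h2]
      have := ih (by simp [h0])
      simp only [List.mem_cons]
      refine ⟨Or.inr this.1, ?_⟩
      rintro w (hw | hw)
      · tauto
      · have := this.2 w hw; tauto

theorem insRow_revRow {b y : ℕ} {ys : List ℕ} (hs : (y :: ys).Pairwise (· < ·)) (hy : y < b)
    (hb : b ∉ ys) :
    insRow (revRow b (y :: ys)).2 (revRow b (y :: ys)).1 = (y :: ys, some b) ∧
    (revRow b (y :: ys)).1.Pairwise (· < ·) := by
  induction ys generalizing y with
  | nil => simp [revRow, insRow, hy]
  | cons z zs ih =>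
    rcases revRow_cases b y (z :: zs) with ⟨h1, h2⟩ | ⟨z', zs', h0, h1, h2⟩
    · rw [h1]
      simp [insRow, hy] at h2 hb ⊢
      have : b < z := by omega
      simp at hs
      exact ⟨⟨this, fun w hw => this.trans (hs.2.1 w hw)⟩, hs.2⟩
    · rw [h2]
      rw [List.pairwise_cons] at hs
      simp at h0
      rw [← h0.1] at h1
      simp only [List.mem_cons, not_or] at hb
      have h3 := ih hs.2 h1 hb.2
      have h4 := revRow_mem (b := b) (row := z :: zs) (by simp)
      have h5 := hs.1 _ h4.1
      constructor
      · rw [insRow, if_neg (by omega), h3.1]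
      · rw [List.pairwise_cons]
        refine ⟨fun w hw => ?_, h3.2⟩
        rcases h4.2 w hw with rfl | hw
        · exact hy
        · exact hs.1 w hw

theorem revRow_dom_of_gt {b : ℕ} {row s : List ℕ} (h : Dom row s) (hb : ∀ z ∈ s, b < z) :
    Dom (revRow b row).1 s := by
  induction row generalizing s with
  | nil => simpa [revRow] using h
  | cons y ys ih =>
    cases s with
    | nil => simp
    | cons c s =>
      simp at h hb
      rcases revRow_cases b y ys with ⟨h1, h2⟩ | ⟨z', zs', h0, h1, h2⟩
      · rw [h1]; simp [hb.1, h.2]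
      · rw [h2]; simp [h.1]; exact ih h.2 hb.2

theorem dom_insRow_head {b y : ℕ} {ys s : List ℕ} (h : Dom (y :: ys) (insRow b s).1) : y < b := by
  cases s with
  | nil => simpa [insRow] using h
  | cons c s =>
    rw [insRow] at h
    split at h
    · simpa using h.1
    · simp at h; omega

theorem revRow_dom {b : ℕ} {row s : List ℕ} (hs : s.Pairwise (· < ·))
    (h : Dom row (insRow b s).1) : Dom (revRow b row).1 s := by
  induction row generalizing s with
  | nil =>
    exfalso
    have := insRow_ne_nil b s
    cases h' : (insRow b s).1 with
    | nil => exact this h'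
    | cons c t => rw [h'] at h; simp at h
  | cons y ys ih =>
    cases s with
    | nil => simp
    | cons c s =>
      rw [List.pairwise_cons] at hs
      rw [insRow] at h
      split at h
      · rename_i hbc
        simp at h
        rcases revRow_cases b y ys with ⟨h1, h2⟩ | ⟨z', zs', h0, h1, h2⟩
        · rw [h1]; simp [hbc, h.2]
        · rw [h2]; simp
          exact ⟨by omega, revRow_dom_of_gt h.2 (fun z hz => hbc.trans (hs.1 z hz))⟩
      · simp at h
        rcases revRow_cases b y ys with ⟨h1, h2⟩ | ⟨z', zs', h0, h1, h2⟩
        · exfalso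
          cases ys with
          | nil =>
            have h3 := dom_length h.2
            have := List.length_pos_of_ne_nil (insRow_ne_nil b s)
            simp at h3
            exact insRow_ne_nil b s h3
          | cons z zs =>
            have := dom_insRow_head h.2
            simp at h2
            omega
        · rw [h2]; simp [h.1]; exact ih hs.2 h.2

/-! ### Placing a label -/

def pl (l : ℕ) : ℕ → Tab → Tab
  | _, [] => [[l]]
  | 0, row :: rest => (row ++ [l]) :: rest
  | k + 1, row :: rest => row :: pl l k rest

theorem place_eq (l : ℕ) (pos : ℕ × ℕ) (T : Tab) : place l pos T = pl l pos.1 T := by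
  obtain ⟨r, c⟩ := pos
  induction T generalizing r with
  | nil => simp [place, pl]
  | cons row rest ih =>
    cases r with
    | zero => simp [place, pl]
    | succ k =>
      rw [pl, ← ih k]
      simp only [place, List.length_cons, Nat.add_lt_add_iff_right]
      split <;> simp

theorem pl_perm (l r : ℕ) (T : Tab) : (pl l r T).flatten.Perm (l :: T.flatten) := by
  induction T generalizing r with
  | nil => simp [pl]
  | cons row rest ih =>
    cases r with
    | zero => simp [pl]
    | succ k =>
      simp only [pl, List.flatten_cons]
      exact ((ih k).append_left row).trans List.perm_middle

theorem pl_inj {l r r' : ℕ} {T T' : Tab} (hT : STab T) (hT' : STab T') (hl : l ∉ T.flatten)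
    (hl' : l ∉ T'.flatten) (hr : r ≤ T.length) (hr' : r' ≤ T'.length)
    (h : pl l r T = pl l r' T') : r = r' ∧ T = T' := by
  induction T generalizing r r' T' with
  | nil =>
    simp at hr
    subst hr
    cases T' with
    | nil => simp at hr'; simp [hr']
    | cons row rest =>
      cases r' with
      | zero => simp [pl] at h hT'; tauto
      | succ k => simp [pl] at h hl'; simp [← h.1] at hl'
  | cons row rest ih =>
    cases T' with
    | nil =>
      cases r with
      | zero => simp [pl] at h hT; tauto
      | succ k => simp [pl] at h hl; simp [h.1] at hl
    | cons row' rest' =>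
      cases r with
      | zero =>
        cases r' with
        | zero => simpa [pl] using h
        | succ k' =>
          exfalso
          simp only [pl, List.cons.injEq] at h
          apply hl'
          simp [← h.1]
      | succ k =>
        cases r' with
        | zero =>
          exfalso
          simp only [pl, List.cons.injEq] at h
          apply hl
          simp [h.1]
        | succ k' =>
          simp only [pl, List.cons.injEq] at h
          simp at hT hT' hl hl' hr hr'
          have := ih hT.2.2.2 hT'.2.2.2 (by simpa using hl.2) (by simpa using hl'.2) hr hr' h.2
          simp [this, h.1]

theorem pl_headD (l r : ℕ) (T : Tab) :
    (pl l r T).headD [] = T.headD [] ∨ (pl l r T).headD [] = T.headD [] ++ [l] := by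
  cases T with
  | nil => simp [pl]
  | cons row rest => cases r <;> simp [pl]

theorem headD_length {A B : Tab} (h : A.map List.length = B.map List.length) :
    (A.headD []).length = (B.headD []).length := by
  cases A <;> cases B <;> simp_all

theorem pl_sTab {l r : ℕ} {T A : Tab} (hT : STab T) (hl : ∀ y ∈ T.flatten, y < l) (hA : STab A)
    (h : A.map List.length = (pl l r T).map List.length) : STab (pl l r T) := by
  induction T generalizing r A with
  | nil => simp [pl]
  | cons row rest ih =>
    rw [sTab_cons] at hT
    have hl1 : ∀ y ∈ row, y < l := fun y hy => hl y (by simp [hy])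
    have hl2 : ∀ y ∈ rest.flatten, y < l := fun y hy => hl y (by
      rw [List.flatten_cons, List.mem_append]; exact Or.inr hy)
    cases r with
    | zero =>
      simp only [pl, sTab_cons]
      refine ⟨by simp, ?_, dom_append_left l hT.2.2.1, hT.2.2.2⟩
      rw [List.pairwise_append]
      refine ⟨hT.2.1, by simp, ?_⟩
      intro a ha b hb
      simp at hb
      subst hb
      exact hl1 a ha
    | succ k =>
      simp only [pl, sTab_cons]
      cases A with
      | nil => simp [pl] at h
      | cons a A =>
        simp only [pl, List.map_cons, List.cons.injEq] at h
        rw [sTab_cons] at hA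
        refine ⟨hT.1, hT.2.1, ?_, ih hT.2.2.2 hl2 hA.2.2.2 h.2⟩
        rcases pl_headD l k rest with h1 | h1
        · rw [h1]; exact hT.2.2.1
        · have h2 := headD_length h.2
          have h3 := dom_length hA.2.2.1
          rw [h1] at h2 ⊢
          simp only [List.length_append, List.length_singleton] at h2
          exact dom_append_right hT.2.2.1 (by omega) hl1

theorem unpl {l : ℕ} {T : Tab} (hT : STab T) (hl : l ∈ T.flatten) (hm : ∀ y ∈ T.flatten, y ≤ l) :
    ∃ r T', T = pl l r T' ∧ STab T' ∧ r ≤ T'.length := by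
  induction T with
  | nil => simp at hl
  | cons row rest ih =>
    rw [sTab_cons] at hT
    have hl1 : ∀ y ∈ row, y ≤ l := fun y hy => hm y (by simp [hy])
    have hl2 : ∀ y ∈ rest.flatten, y ≤ l := fun y hy => hm y (by
      rw [List.flatten_cons, List.mem_append]; exact Or.inr hy)
    rw [List.flatten_cons, List.mem_append] at hl
    by_cases hlr : l ∈ row
    · obtain ⟨row0, a, rfl⟩ : ∃ row0 a, row = row0 ++ [a] :=
        ⟨row.dropLast, row.getLast hT.1, (List.dropLast_append_getLast hT.1).symm⟩
      have hs := hT.2.1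
      rw [List.pairwise_append] at hs
      have hal : a = l := by
        have h1 := hl1 a (by simp)
        rcases List.mem_append.1 hlr with h2 | h2
        · have := hs.2.2 l h2 a (by simp)
          omega
        · exact (List.mem_singleton.1 h2).symm
      subst hal
      have hd : Dom row0 (rest.headD []) := by
        apply dom_of_append_left_max hT.2.2.1
        intro y hy
        cases rest with
        | nil => simp at hy
        | cons r2 rest =>
          exact hl2 y (by rw [List.flatten_cons, List.mem_append]; exact Or.inl (by simpa using hy))
      by_cases h0 : row0 = []
      · subst h0
        cases rest with
        | nil => exact ⟨0, [], by simp [pl], by simp, by simp⟩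
        | cons r2 rest =>
          exfalso
          have h1 := dom_length hd
          have h2 := hT.2.2.2
          rw [sTab_cons] at h2
          apply h2.1
          simpa using h1
      · refine ⟨0, row0 :: rest, by simp [pl], ?_, by simp⟩
        rw [sTab_cons]
        exact ⟨h0, hs.1, hd, hT.2.2.2⟩
    · obtain ⟨k, T', h1, h2, h3⟩ := ih hT.2.2.2 (hl.resolve_left hlr) hl2
      refine ⟨k + 1, row :: T', by simp [pl, h1], ?_, by simpa using h3⟩
      rw [sTab_cons]
      refine ⟨hT.1, hT.2.1, ?_, h2⟩
      have hd := hT.2.2.1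
      rw [h1] at hd
      rcases pl_headD l k T' with h4 | h4
      · rwa [h4] at hd
      · rw [h4] at hd; exact dom_of_append_right hd

/-! ### Tableau insertion -/

theorem insTab_none {x : ℕ} {row : List ℕ} {rest : Tab} (h : (insRow x row).2 = none) :
    insTab x (row :: rest) = ((row ++ [x]) :: rest, 0, row.length) := by
  rw [insTab]; simp [h, insRow_none h]

theorem insTab_some {x b : ℕ} {row : List ℕ} {rest : Tab} (h : (insRow x row).2 = some b) :
    insTab x (row :: rest) = ((insRow x row).1 :: (insTab b rest).1,
      (insTab b rest).2.1 + 1, (insTab b rest).2.2) := by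
  rw [insTab]; simp [h]

theorem insTab_perm (x : ℕ) (T : Tab) : (insTab x T).1.flatten.Perm (x :: T.flatten) := by
  induction T generalizing x with
  | nil => simp [insTab]
  | cons row rest ih =>
    cases h : (insRow x row).2 with
    | none => rw [insTab_none h]; simp
    | some b =>
      rw [insTab_some h]
      have h1 := insRow_perm x row
      rw [h] at h1
      simp only [List.flatten_cons]
      refine ((ih b).append_left _).trans ?_
      have := h1.append_right rest.flatten
      simpa using this

theorem insTab_headD (x : ℕ) (T : Tab) : (insTab x T).1.headD [] = (insRow x (T.headD [])).1 := by
  cases T with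
  | nil => simp [insTab, insRow]
  | cons row rest =>
    cases h : (insRow x row).2 with
    | none => rw [insTab_none h]; simp [insRow_none h]
    | some b => rw [insTab_some h]; simp

theorem insTab_row_le (x : ℕ) (T : Tab) : (insTab x T).2.1 ≤ T.length := by
  induction T generalizing x with
  | nil => simp [insTab]
  | cons row rest ih =>
    cases h : (insRow x row).2 with
    | none => rw [insTab_none h]; simp
    | some b => rw [insTab_some h]; simpa using ih b

theorem insTab_shape {x l : ℕ} {T B : Tab} (h : T.map List.length = B.map List.length) :
    (insTab x T).1.map List.length = (pl l (insTab x T).2.1 B).map List.length := by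
  induction T generalizing x B with
  | nil =>
    cases B with
    | nil => simp [insTab, pl]
    | cons => simp at h
  | cons row rest ih =>
    cases B with
    | nil => simp at h
    | cons row' B =>
      simp only [List.map_cons, List.cons.injEq] at h
      cases h' : (insRow x row).2 with
      | none => rw [insTab_none h']; simp [pl, h]
      | some b =>
        rw [insTab_some h']
        simp only [pl, List.map_cons, List.cons.injEq]
        exact ⟨by rw [insRow_some_length h', h.1], ih h.2⟩

theorem insTab_sTab {x : ℕ} {T : Tab} (hT : STab T) (hx : (x :: T.flatten).Nodup) :
    STab (insTab x T).1 := by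
  induction T generalizing x with
  | nil => simp [insTab]
  | cons row rest ih =>
    rw [sTab_cons] at hT
    rw [List.flatten_cons] at hx
    have hxr : x ∉ row := fun h => (List.nodup_cons.1 hx).1 (List.mem_append_left _ h)
    have hso := insRow_sorted hT.2.1 hxr
    cases h : (insRow x row).2 with
    | none =>
      rw [insRow_none h] at hso
      rw [insTab_none h, sTab_cons]
      exact ⟨by simp, hso, dom_append_left x hT.2.2.1, hT.2.2.2⟩
    | some b =>
      rw [insTab_some h, sTab_cons]
      refine ⟨insRow_ne_nil _ _, hso, ?_, ?_⟩
      · rw [insTab_headD]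
        exact dom_insRow_insRow hT.2.2.1 hT.2.1 h
      · apply ih hT.2.2.2
        have h2 := List.nodup_append.1 (List.nodup_cons.1 hx).2
        rw [List.nodup_cons]
        exact ⟨fun hb => h2.2.2 b (insRow_some_lt h).2 b hb rfl, h2.2.1⟩

theorem insTab_inj {x x' : ℕ} {T T' : Tab} (hT : STab T) (hT' : STab T')
    (hx : (x :: T.flatten).Nodup) (hx' : (x' :: T'.flatten).Nodup)
    (h1 : (insTab x T).1 = (insTab x' T').1) (h2 : (insTab x T).2.1 = (insTab x' T').2.1) :
    x = x' ∧ T = T' := by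
  induction T generalizing x x' T' with
  | nil =>
    cases T' with
    | nil => simpa [insTab] using h1
    | cons row rest =>
      cases h' : (insRow x' row).2 with
      | none =>
        rw [insTab_none h'] at h1
        simp only [insTab, List.cons.injEq] at h1
        have h3 := congrArg List.length h1.1
        rw [sTab_cons] at hT'
        simp at h3
        exact absurd h3 hT'.1
      | some b => rw [insTab_some h'] at h2; simp [insTab] at h2
  | cons row rest ih =>
    cases T' with
    | nil =>
      cases h' : (insRow x row).2 with
      | none =>
        rw [insTab_none h'] at h1
        simp only [insTab, List.cons.injEq] at h1
        have h3 := congrArg List.length h1.1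
        rw [sTab_cons] at hT
        simp at h3
        exact absurd h3 hT.1
      | some b => rw [insTab_some h'] at h2; simp [insTab] at h2
    | cons row' rest' =>
      rw [sTab_cons] at hT hT'
      rw [List.flatten_cons] at hx hx'
      have hxr : x ∉ row := fun h => (List.nodup_cons.1 hx).1 (List.mem_append_left _ h)
      have hxr' : x' ∉ row' := fun h => (List.nodup_cons.1 hx').1 (List.mem_append_left _ h)
      cases h : (insRow x row).2 with
      | none =>
        cases h' : (insRow x' row').2 with
        | none =>
          rw [insTab_none h, insTab_none h'] at h1
          simp only [List.cons.injEq] at h1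
          have := List.append_inj' h1.1 rfl
          simp at this
          simp [this, h1.2]
        | some b' => rw [insTab_none h, insTab_some h'] at h2; simp at h2
      | some b =>
        cases h' : (insRow x' row').2 with
        | none => rw [insTab_some h, insTab_none h'] at h2; simp at h2
        | some b' =>
          rw [insTab_some h, insTab_some h'] at h1 h2
          simp only [List.cons.injEq] at h1
          simp only [Nat.add_right_cancel_iff] at h2
          have n1 := List.nodup_append.1 (List.nodup_cons.1 hx).2
          have n2 := List.nodup_append.1 (List.nodup_cons.1 hx').2
          have h3 := ih hT.2.2.2 hT'.2.2.2
            (List.nodup_cons.2 ⟨fun hb => n1.2.2 b (insRow_some_lt h).2 b hb rfl, n1.2.1⟩)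
            (List.nodup_cons.2 ⟨fun hb => n2.2.2 b' (insRow_some_lt h').2 b' hb rfl, n2.2.1⟩)
            h1.2 h2
          obtain ⟨rfl, rfl⟩ := h3
          obtain ⟨rfl, rfl⟩ := insRow_inj hT.2.1 hT'.2.1 hxr hxr' h1.1 h h'
          simp

theorem insTab_surj {l r : ℕ} {T B : Tab} (hT : STab T) (hn : T.flatten.Nodup) (hB : STab B)
    (hr : r ≤ B.length) (h : T.map List.length = (pl l r B).map List.length) :
    ∃ x T', STab T' ∧ T'.map List.length = B.map List.length ∧ (insTab x T').1 = T ∧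
      (insTab x T').2.1 = r := by
  induction T generalizing r B with
  | nil =>
    exfalso
    cases B with
    | nil => simp [pl] at h
    | cons => cases r <;> simp [pl] at h
  | cons row rest ih =>
    rw [sTab_cons] at hT
    cases B with
    | nil =>
      simp at hr
      subst hr
      simp [pl] at h
      obtain ⟨h1, rfl⟩ := h
      obtain ⟨a, rfl⟩ := List.length_eq_one_iff.1 h1
      exact ⟨a, [], by simp, by simp, by simp [insTab], by simp [insTab]⟩
    | cons rowB B =>
      rw [sTab_cons] at hB
      cases r with
      | zero =>
        simp [pl] at h
        obtain ⟨row0, a, rfl⟩ : ∃ row0 a, row = row0 ++ [a] :=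
          ⟨row.dropLast, row.getLast hT.1, (List.dropLast_append_getLast hT.1).symm⟩
        have hs := hT.2.1
        rw [List.pairwise_append] at hs
        simp at h
        have hi := insRow_append (x := a) (row := row0) (fun y hy => hs.2.2 y hy a (by simp))
        refine ⟨a, row0 :: rest, ?_, by simp [h], ?_, ?_⟩
        · rw [sTab_cons]
          refine ⟨?_, hs.1, ?_, hT.2.2.2⟩
          · rintro rfl
            simp at h
            exact hB.1 (List.length_eq_zero_iff.1 h.1.symm)
          · apply dom_of_append_left hT.2.2.1
            rw [h.1, headD_length h.2]
            exact dom_length hB.2.2.1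
        · rw [insTab_none (by rw [hi])]
        · rw [insTab_none (by rw [hi])]
      | succ k =>
        simp only [pl, List.map_cons, List.cons.injEq] at h
        simp at hr
        rw [List.flatten_cons, List.nodup_append] at hn
        obtain ⟨b, T', h1, h2, h3, h4⟩ := ih hT.2.2.2 hn.2.1 hB.2.2.2 hr h.2
        have hd := hT.2.2.1
        rw [← h3, insTab_headD] at hd
        have hbm : b ∈ rest.flatten := by
          rw [← h3]
          exact (insTab_perm b T').symm.subset (by simp)
        obtain ⟨y, ys, rfl⟩ := List.exists_cons_of_ne_nil hT.1
        have hyb := dom_insRow_head hd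
        have hbys : b ∉ ys := fun hb => hn.2.2 b (by simp [hb]) b hbm rfl
        have hrev := insRow_revRow hT.2.1 hyb hbys
        have hso : (T'.headD []).Pairwise (· < ·) := by
          cases T' with
          | nil => simp
          | cons => rw [sTab_cons] at h1; exact h1.2.1
        have hsm : (insRow (revRow b (y :: ys)).2 (revRow b (y :: ys)).1).2 = some b := by
          rw [hrev.1]
        have hlen := insRow_some_length hsm
        rw [hrev.1] at hlen
        refine ⟨(revRow b (y :: ys)).2, (revRow b (y :: ys)).1 :: T', ?_, ?_, ?_, ?_⟩
        · rw [sTab_cons]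
          refine ⟨?_, hrev.2, revRow_dom hso hd, h1⟩
          intro h0
          rw [h0] at hlen
          simp at hlen
        · simp only [List.map_cons, ← hlen, h.1, h2]
        · rw [insTab_some hsm, hrev.1, h3]
        · rw [insTab_some hsm, h4]

/-! ### Pairs of tableaux and the full algorithm -/

def Comp (A B : Tab) : Prop := STab A ∧ STab B ∧ A.map List.length = B.map List.length

theorem Comp.length_eq {A B : Tab} (h : Comp A B) : A.length = B.length := by
  simpa using congrArg List.length h.2.2

theorem Comp.step {A B : Tab} {x l : ℕ} (h : Comp A B) (hx : (x :: A.flatten).Nodup)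
    (hl : ∀ y ∈ B.flatten, y < l) : Comp (insTab x A).1 (pl l (insTab x A).2.1 B) := by
  have h1 := insTab_sTab h.1 hx
  have h2 := insTab_shape (x := x) (l := l) h.2.2
  exact ⟨h1, pl_sTab h.2.1 hl h1 h2, h2⟩

theorem Comp.inj {A B A' B' : Tab} {x x' l : ℕ} (h : Comp A B) (h' : Comp A' B')
    (hx : (x :: A.flatten).Nodup) (hx' : (x' :: A'.flatten).Nodup)
    (hl : l ∉ B.flatten) (hl' : l ∉ B'.flatten)
    (e1 : (insTab x A).1 = (insTab x' A').1)
    (e2 : pl l (insTab x A).2.1 B = pl l (insTab x' A').2.1 B') :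
    x = x' ∧ A = A' ∧ B = B' := by
  have h1 := pl_inj h.2.1 h'.2.1 hl hl' (by rw [← h.length_eq]; exact insTab_row_le _ _)
    (by rw [← h'.length_eq]; exact insTab_row_le _ _) e2
  have h2 := insTab_inj h.1 h'.1 hx hx' e1 h1.1
  exact ⟨h2.1, h2.2, h1.2⟩

theorem Comp.surj {A B : Tab} {l : ℕ} (h : Comp A B) (hn : A.flatten.Nodup) (hl : l ∈ B.flatten)
    (hm : ∀ y ∈ B.flatten, y ≤ l) :
    ∃ x A' B', Comp A' B' ∧ (insTab x A').1 = A ∧ pl l (insTab x A').2.1 B' = B := by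
  obtain ⟨r, B', h1, h2, h3⟩ := unpl h.2.1 hl hm
  obtain ⟨x, A', h4, h5, h6, h7⟩ := insTab_surj h.1 hn h2 h3 (by rw [← h1]; exact h.2.2)
  exact ⟨x, A', B', ⟨h4, h2, h5⟩, h6, by rw [h7, h1]⟩

abbrev St := (Tab × Tab) × (Tab × Tab)

def stepf (v : ℤ) (st : St) (i : ℕ) : St :=
  if 0 < v then
    (((insTab v.natAbs st.1.1).1, st.1.2), (pl i (insTab v.natAbs st.1.1).2.1 st.2.1, st.2.2))
  else
    ((st.1.1, (insTab v.natAbs st.1.2).1), (st.2.1, pl i (insTab v.natAbs st.1.2).2.1 st.2.2))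

theorem RSstep_eq (π : P) (st : St) (i : ℕ) : RSstep π st i = stepf (π i) st i := by
  simp only [RSstep, stepf, place_eq]

def RSf (f : ℕ → ℤ) : ℕ → St
  | 0 => (([], []), ([], []))
  | k + 1 => stepf (f (k + 1)) (RSf f k) (k + 1)

theorem RSfull_eq (n : ℕ) (π : P) : RSfull n π = RSf (fun i => π i) n := by
  induction n with
  | zero => simp [RSfull, RSf]
  | succ n ih =>
    rw [RSf, ← ih, ← RSstep_eq]
    simp [RSfull, List.range_succ]

def vals (f : ℕ → ℤ) : ℕ → List ℕ
  | 0 => []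
  | k + 1 => (f (k + 1)).natAbs :: vals f k

theorem mem_vals {f : ℕ → ℤ} {k a : ℕ} :
    a ∈ vals f k ↔ ∃ i, 1 ≤ i ∧ i ≤ k ∧ (f i).natAbs = a := by
  induction k with
  | zero => simp [vals]
  | succ k ih =>
    simp only [vals, List.mem_cons, ih]
    constructor
    · rintro (rfl | ⟨i, h1, h2, h3⟩)
      · exact ⟨k + 1, by omega, le_rfl, rfl⟩
      · exact ⟨i, h1, by omega, h3⟩
    · rintro ⟨i, h1, h2, h3⟩
      by_cases hi : i = k + 1
      · subst hi; exact Or.inl h3.symm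
      · exact Or.inr ⟨i, h1, by omega, h3⟩

theorem vals_length (f : ℕ → ℤ) (k : ℕ) : (vals f k).length = k := by
  induction k with
  | zero => simp [vals]
  | succ k ih => simp [vals, ih]

theorem vals_inj {f : ℕ → ℤ} {k : ℕ} (h : (vals f k).Nodup) {i j : ℕ} (hi : 1 ≤ i) (hi' : i ≤ k)
    (hj : 1 ≤ j) (hj' : j ≤ k) (e : (f i).natAbs = (f j).natAbs) : i = j := by
  induction k with
  | zero => omega
  | succ k ih =>
    rw [vals, List.nodup_cons, mem_vals] at h
    by_cases h1 : i = k + 1 <;> by_cases h2 : j = k + 1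
    · omega
    · subst h1; exact absurd ⟨j, hj, by omega, e.symm⟩ h.1
    · subst h2; exact absurd ⟨i, hi, by omega, e⟩ h.1
    · exact ih h.2 (by omega) (by omega)

theorem vals_nodup {f : ℕ → ℤ} {k : ℕ}
    (h : ∀ i j, 1 ≤ i → i ≤ k → 1 ≤ j → j ≤ k → (f i).natAbs = (f j).natAbs → i = j) :
    (vals f k).Nodup := by
  induction k with
  | zero => simp [vals]
  | succ k ih =>
    rw [vals, List.nodup_cons, mem_vals]
    refine ⟨?_, ih (fun i j a b c d e => h i j a (by omega) c (by omega) e)⟩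
    rintro ⟨i, h1, h2, h3⟩
    have := h i (k + 1) h1 (by omega) (by omega) le_rfl h3
    omega

theorem vals_congr {f g : ℕ → ℤ} {k : ℕ} (h : ∀ i, i ≤ k → f i = g i) :
    RSf f k = RSf g k ∧ vals f k = vals g k := by
  induction k with
  | zero => simp [RSf, vals]
  | succ k ih =>
    have := ih (fun i hi => h i (by omega))
    simp [RSf, vals, this, h (k + 1) le_rfl]

theorem RSf_congr {f g : ℕ → ℤ} {k : ℕ} (h : ∀ i, 1 ≤ i → i ≤ k → f i = g i) :
    RSf f k = RSf g k := by
  induction k with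
  | zero => simp [RSf]
  | succ k ih =>
    rw [RSf, RSf, ih (fun i h1 h2 => h i h1 (by omega)), h (k + 1) (by omega) le_rfl]

def Inv (st : St) (L : List ℕ) (k : ℕ) : Prop :=
  Comp st.1.1 st.2.1 ∧ Comp st.1.2 st.2.2 ∧ (st.1.1.flatten ++ st.1.2.flatten).Perm L ∧
    (st.2.1.flatten ++ st.2.2.flatten).Perm (List.range' 1 k)

theorem range_perm (k : ℕ) : (List.range' 1 (k + 1)).Perm ((k + 1) :: List.range' 1 k) := by
  rw [List.range'_1_concat, Nat.add_comm 1 k]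
  exact List.perm_append_comm

theorem Inv.mem_le {st : St} {L : List ℕ} {k : ℕ} (h : Inv st L k) :
    (∀ y ∈ st.2.1.flatten, y < k + 1) ∧ (∀ y ∈ st.2.2.flatten, y < k + 1) := by
  constructor
  · intro y hy
    have := h.2.2.2.subset (List.mem_append_left _ hy)
    simp at this
    omega
  · intro y hy
    have := h.2.2.2.subset (List.mem_append_right _ hy)
    simp at this
    omega

theorem Inv.nodup {st : St} {L : List ℕ} {k x : ℕ} (h : Inv st L k) (hx : (x :: L).Nodup) :
    (x :: st.1.1.flatten).Nodup ∧ (x :: st.1.2.flatten).Nodup := by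
  have h1 := ((h.2.2.1.cons x).nodup_iff).2 hx
  rw [List.nodup_cons, List.mem_append, not_or, List.nodup_append] at h1
  exact ⟨List.nodup_cons.2 ⟨h1.1.1, h1.2.1⟩, List.nodup_cons.2 ⟨h1.1.2, h1.2.2.1⟩⟩

theorem Inv.step {st : St} {L : List ℕ} {k : ℕ} {v : ℤ} (h : Inv st L k)
    (hx : (v.natAbs :: L).Nodup) : Inv (stepf v st (k + 1)) (v.natAbs :: L) (k + 1) := by
  have hn := h.nodup hx
  have hm := h.mem_le
  obtain ⟨h1, h2, h3, h4⟩ := h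
  have hr := range_perm k
  unfold stepf
  split
  · refine ⟨h1.step hn.1 hm.1, h2, ?_, ?_⟩
    · exact ((insTab_perm _ _).append_right _).trans (h3.cons _)
    · exact ((pl_perm _ _ _).append_right _).trans ((h4.cons _).trans hr.symm)
  · refine ⟨h1, h2.step hn.2 hm.2, ?_, ?_⟩
    · exact ((insTab_perm _ _).append_left _).trans (List.perm_middle.trans (h3.cons _))
    · exact ((pl_perm _ _ _).append_left _).trans
        (List.perm_middle.trans ((h4.cons _).trans hr.symm))

theorem stepf_inj {st st' : St} {L L' : List ℕ} {k : ℕ} {v v' : ℤ} (h : Inv st L k)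
    (h' : Inv st' L' k) (hx : (v.natAbs :: L).Nodup) (hx' : (v'.natAbs :: L').Nodup)
    (hv : v ≠ 0) (hv' : v' ≠ 0) (e : stepf v st (k + 1) = stepf v' st' (k + 1)) :
    v = v' ∧ st = st' := by
  have hn := h.nodup hx
  have hm := h.mem_le
  have hn' := h'.nodup hx'
  have hm' := h'.mem_le
  have m1 : k + 1 ∉ st.2.1.flatten := fun q => absurd (hm.1 _ q) (by omega)
  have m2 : k + 1 ∉ st.2.2.flatten := fun q => absurd (hm.2 _ q) (by omega)
  have m1' : k + 1 ∉ st'.2.1.flatten := fun q => absurd (hm'.1 _ q) (by omega)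
  have m2' : k + 1 ∉ st'.2.2.flatten := fun q => absurd (hm'.2 _ q) (by omega)
  obtain ⟨h1, h2, h3, h4⟩ := h
  obtain ⟨h1', h2', h3', h4'⟩ := h'
  obtain ⟨⟨A1, A2⟩, ⟨B1, B2⟩⟩ := st
  obtain ⟨⟨A1', A2'⟩, ⟨B1', B2'⟩⟩ := st'
  unfold stepf at e
  dsimp only at *
  by_cases p : 0 < v <;> by_cases p' : 0 < v'
  · simp only [p, p', if_true, Prod.mk.injEq] at e
    obtain ⟨⟨e1, rfl⟩, e2, rfl⟩ := e
    obtain ⟨q1, rfl, rfl⟩ := h1.inj h1' hn.1 hn'.1 m1 m1' e1 e2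
    exact ⟨by omega, rfl⟩
  · simp only [p, p', if_true, if_false, Prod.mk.injEq] at e
    exfalso
    apply m1'
    rw [← e.2.1]
    exact (pl_perm _ _ _).symm.subset (by simp)
  · simp only [p, p', if_true, if_false, Prod.mk.injEq] at e
    exfalso
    apply m1
    rw [e.2.1]
    exact (pl_perm _ _ _).symm.subset (by simp)
  · simp only [p, p', if_false, Prod.mk.injEq] at e
    obtain ⟨⟨rfl, e1⟩, rfl, e2⟩ := e
    obtain ⟨q1, rfl, rfl⟩ := h2.inj h2' hn.2 hn'.2 m2 m2' e1 e2
    exact ⟨by omega, rfl⟩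

theorem stepf_surj {st : St} {L : List ℕ} {k : ℕ} (h : Inv st L (k + 1)) (hL : L.Nodup)
    (h0 : 0 ∉ L) : ∃ v st' L', Inv st' L' k ∧ L.Perm (v.natAbs :: L') ∧
      stepf v st' (k + 1) = st := by
  obtain ⟨h1, h2, h3, h4⟩ := h
  obtain ⟨⟨A1, A2⟩, ⟨B1, B2⟩⟩ := st
  dsimp only at *
  have hr := h4.trans (range_perm k)
  have hle : ∀ y ∈ B1.flatten ++ B2.flatten, y ≤ k + 1 := by
    intro y hy
    have := h4.subset hy
    simp at this
    omega
  have hn := List.nodup_append.1 (h3.nodup_iff.2 hL)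
  rcases List.mem_append.1 (hr.symm.subset (List.mem_cons_self)) with hk | hk
  · obtain ⟨x, A', B', c, e1, e2⟩ := h1.surj hn.1 hk
      (fun y hy => hle y (List.mem_append_left _ hy))
    have p1 := insTab_perm x A'
    rw [e1] at p1
    have p2 := pl_perm (k + 1) (insTab x A').2.1 B'
    rw [e2] at p2
    have q1 := h3.symm.trans (p1.append_right A2.flatten)
    have hx : x ≠ 0 := by
      rintro rfl
      exact h0 (q1.symm.subset (by simp))
    refine ⟨(x : ℤ), ((A', A2), (B', B2)), A'.flatten ++ A2.flatten, ⟨c, h2, List.Perm.refl _, ?_⟩,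
      ?_, ?_⟩
    · exact List.Perm.cons_inv ((p2.append_right B2.flatten).symm.trans hr)
    · simpa using q1
    · have : (0 : ℤ) < x := by omega
      simp [stepf, e1, e2, hx, Nat.pos_of_ne_zero]
  · obtain ⟨x, A', B', c, e1, e2⟩ := h2.surj hn.2.1 hk
      (fun y hy => hle y (List.mem_append_right _ hy))
    have p1 := insTab_perm x A'
    rw [e1] at p1
    have p2 := pl_perm (k + 1) (insTab x A').2.1 B'
    rw [e2] at p2
    have q1 := (h3.symm.trans (p1.append_left A1.flatten)).trans List.perm_middle
    refine ⟨-(x : ℤ), ((A1, A'), (B1, B')), A1.flatten ++ A'.flatten, ⟨h1, c, List.Perm.refl _, ?_⟩,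
      ?_, ?_⟩
    · exact List.Perm.cons_inv
        ((((p2.append_left B1.flatten)).trans List.perm_middle).symm.trans hr)
    · simpa using q1
    · simp [stepf, e1, e2]

theorem RSf_inv {f : ℕ → ℤ} {k : ℕ} (h : (vals f k).Nodup) : Inv (RSf f k) (vals f k) k := by
  induction k with
  | zero => simp [RSf, vals, Inv, Comp]
  | succ k ih => exact (ih (List.nodup_cons.1 h).2).step h

theorem RSf_inj {f g : ℕ → ℤ} {k : ℕ} (hf : (vals f k).Nodup) (hg : (vals g k).Nodup)
    (hf0 : 0 ∉ vals f k) (hg0 : 0 ∉ vals g k) (e : RSf f k = RSf g k) :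
    ∀ i, 1 ≤ i → i ≤ k → f i = g i := by
  induction k with
  | zero => intros; omega
  | succ k ih =>
    have hf' := (List.nodup_cons.1 hf).2
    have hg' := (List.nodup_cons.1 hg).2
    simp only [vals, List.mem_cons, not_or] at hf0 hg0
    have h1 := stepf_inj (RSf_inv hf') (RSf_inv hg') hf hg (by omega) (by omega) e
    intro i hi hi'
    by_cases hik : i = k + 1
    · rw [hik]; exact h1.1
    · exact ih hf' hg' hf0.2 hg0.2 h1.2 i hi (by omega)

theorem RSf_surj {st : St} {L : List ℕ} {k : ℕ} (h : Inv st L k) (hL : L.Nodup)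
    (h0 : 0 ∉ L) : ∃ f, RSf f k = st ∧ (vals f k).Perm L := by
  induction k generalizing st L with
  | zero =>
    obtain ⟨h1, h2, h3, h4⟩ := h
    obtain ⟨⟨A1, A2⟩, ⟨B1, B2⟩⟩ := st
    dsimp only at *
    have key : ∀ T : Tab, STab T → T.flatten = [] → T = [] := by
      intro T hT hf
      cases T with
      | nil => rfl
      | cons r T =>
        rw [sTab_cons] at hT
        rw [List.flatten_cons, List.append_eq_nil_iff] at hf
        exact absurd hf.1 hT.1
    simp only [List.range'_zero, List.perm_nil, List.append_eq_nil_iff] at h4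
    have e1 := key B1 h1.2.1 h4.1
    have e2 := key B2 h2.2.1 h4.2
    subst e1 e2
    have e3 : A1 = [] := by simpa using h1.2.2
    have e4 : A2 = [] := by simpa using h2.2.2
    subst e3 e4
    exact ⟨fun _ => 0, rfl, by simpa [vals] using h3⟩
  | succ k ih =>
    obtain ⟨v, st', L', i1, i2, i3⟩ := stepf_surj h hL h0
    have hL' := List.nodup_cons.1 (i2.nodup_iff.1 hL)
    obtain ⟨f, f1, f2⟩ := ih i1 hL'.2 (fun q => h0 (i2.symm.subset (by simp [q])))
    have hc := vals_congr (f := Function.update f (k + 1) v) (g := f) (k := k) (by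
      intro i hi
      rw [Function.update_of_ne (by omega)])
    refine ⟨Function.update f (k + 1) v, ?_, ?_⟩
    · rw [RSf, hc.1, f1, Function.update_self, i3]
    · rw [vals, hc.2, Function.update_self]
      exact (f2.cons _).trans i2.symm

/-! ### From words to signed permutations -/

theorem W_zero {n : ℕ} {π : P} (h : π ∈ Wset n) : π 0 = 0 := by
  have := h.1 0
  simp at this
  omega

theorem W_nodup {n : ℕ} {π : P} (h : π ∈ Wset n) : (vals (fun i => π i) n).Nodup := by
  apply vals_nodup
  intro i j hi hi' hj hj' e
  rcases Int.natAbs_eq_natAbs_iff.1 e with e | e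
  · have := π.injective e
    omega
  · rw [← h.1] at e
    have := π.injective e
    omega

theorem W_range {n : ℕ} {π : P} (h : π ∈ Wset n) {i : ℤ} (hi : |i| ≤ n) : |π i| ≤ n := by
  by_contra hc
  have h1 := h.2 (π i) (by omega)
  have h2 := π.injective h1
  rw [h2] at hc
  exact hc hi

theorem W_vals {n : ℕ} {π : P} (h : π ∈ Wset n) :
    (vals (fun i => π i) n).Perm (List.range' 1 n) := by
  have hn := W_nodup h
  apply List.Subperm.perm_of_length_le
  · apply List.subperm_of_subset hn
    intro a ha
    obtain ⟨i, h1, h2, h3⟩ := mem_vals.1 ha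
    have h4 := W_range h (i := i) (by rw [abs_of_nonneg] <;> omega)
    have h5 : π i ≠ 0 := by
      intro h6
      rw [← W_zero h] at h6
      have := π.injective h6
      omega
    rw [List.mem_range'_1]
    rw [Int.abs_eq_natAbs] at h4
    omega
  · rw [vals_length, List.length_range']

theorem inv_iff (n : ℕ) (p : St) : Inv p (List.range' 1 n) n ↔
    IsNStdBitab n p.1 ∧ IsNStdBitab n p.2 ∧ shape2 p.1 = shape2 p.2 := by
  simp only [Inv, Comp, IsNStdBitab, shape2, isStdTab_iff, Prod.mk.injEq]
  tauto

theorem exists_perm {n : ℕ} {f : ℕ → ℤ} (h : (vals f n).Perm (List.range' 1 n)) :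
    ∃ π ∈ Wset n, ∀ i : ℕ, 1 ≤ i → i ≤ n → π i = f i := by
  have hn : (vals f n).Nodup := h.nodup_iff.2 List.nodup_range'
  have hr : ∀ i : ℕ, 1 ≤ i → i ≤ n → 1 ≤ (f i).natAbs ∧ (f i).natAbs ≤ n := by
    intro i hi hi'
    have := h.subset (mem_vals.2 ⟨i, hi, hi', rfl⟩)
    rw [List.mem_range'_1] at this
    omega
  have hs : ∀ a : ℕ, 1 ≤ a → a ≤ n → ∃ i, 1 ≤ i ∧ i ≤ n ∧ (f i).natAbs = a := by
    intro a h1 h2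
    apply mem_vals.1
    apply h.symm.subset
    rw [List.mem_range'_1]
    omega
  let F : ℤ → ℤ := fun i =>
    if (n : ℤ) < |i| then i else if 0 < i then f i.natAbs else if i < 0 then - f i.natAbs else 0
  have Fout : ∀ i : ℤ, (n : ℤ) < |i| → F i = i := fun i hi => by simp [F, hi]
  have Fpos : ∀ i : ℕ, 1 ≤ i → i ≤ n → F i = f i := by
    intro i h1 h2
    have a1 : ¬ ((n : ℤ) < |(i : ℤ)|) := by rw [abs_of_nonneg] <;> omega
    have a2 : (0 : ℤ) < i := by omega
    simp only [F, a1, a2, if_true, if_false, Int.natAbs_natCast]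
  have F0 : F 0 = 0 := by simp [F]
  have Fneg : ∀ i : ℤ, F (-i) = - F i := by
    intro i
    simp only [F, abs_neg, Int.natAbs_neg]
    split_ifs <;> first | omega | simp
  have hcases : ∀ i : ℤ, (n : ℤ) < |i| ∨ i = 0 ∨
      ∃ j : ℕ, 1 ≤ j ∧ j ≤ n ∧ (i = j ∨ i = -j) := by
    intro i
    rw [Int.abs_eq_natAbs]
    by_cases h1 : (n : ℤ) < i.natAbs
    · exact Or.inl h1
    · by_cases h2 : i = 0
      · exact Or.inr (Or.inl h2)
      · exact Or.inr (Or.inr ⟨i.natAbs, by omega, by omega, by omega⟩)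
  have hinj : Function.Injective F := by
    intro i j e
    have small : ∀ k : ℕ, 1 ≤ k → k ≤ n → 1 ≤ (F k).natAbs ∧ (F k).natAbs ≤ n := by
      intro k h1 h2
      rw [Fpos k h1 h2]
      exact hr k h1 h2
    have inj : ∀ k l : ℕ, 1 ≤ k → k ≤ n → 1 ≤ l → l ≤ n → (F k).natAbs = (F l).natAbs → k = l := by
      intro k l h1 h2 h3 h4 h5
      rw [Fpos k h1 h2, Fpos l h3 h4] at h5
      exact vals_inj hn h1 h2 h3 h4 h5
    rcases hcases i with hi | rfl | ⟨k, k1, k2, hk⟩ <;>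
    rcases hcases j with hj | rfl | ⟨l, l1, l2, hl⟩
    · rwa [Fout i hi, Fout j hj] at e
    · rw [Fout i hi, F0] at e; exact e
    · rw [Fout i hi] at e
      have := small l l1 l2
      rw [Int.abs_eq_natAbs] at hi
      rcases hl with rfl | rfl
      · omega
      · rw [Fneg] at e; omega
    · rw [Fout j hj, F0] at e; exact e
    · rfl
    · have := small l l1 l2
      rcases hl with rfl | rfl
      · omega
      · rw [Fneg] at e; omega
    · rw [Fout j hj] at e
      have := small k k1 k2
      rw [Int.abs_eq_natAbs] at hj
      rcases hk with rfl | rfl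
      · omega
      · rw [Fneg] at e; omega
    · have := small k k1 k2
      rcases hk with rfl | rfl
      · omega
      · rw [Fneg] at e; omega
    · have s1 := small k k1 k2
      have : k = l := by
        apply inj k l k1 k2 l1 l2
        rcases hk with rfl | rfl <;> rcases hl with rfl | rfl <;>
          (try simp only [Fneg] at e) <;> omega
      subst this
      rcases hk with rfl | rfl <;> rcases hl with rfl | rfl <;>
          (try simp only [Fneg] at e) <;> omega
  have hsurj : Function.Surjective F := by
    intro a
    rcases hcases a with ha | rfl | ⟨k, k1, k2, hk⟩
    · exact ⟨a, Fout a ha⟩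
    · exact ⟨0, F0⟩
    · obtain ⟨i, i1, i2, i3⟩ := hs k k1 k2
      have := Fpos i i1 i2
      by_cases hfa : f i = a
      · exact ⟨i, by rw [this, hfa]⟩
      · exact ⟨-i, by rw [Fneg, this]; omega⟩
  exact ⟨Equiv.ofBijective F ⟨hinj, hsurj⟩, ⟨Fneg, Fout⟩, Fpos⟩

end GRS

/-- The map `π ↦ (A_n(π), B_n(π))` is a bijection from `W_n`
onto the set of all pairs of `n`-standard bitableaux having the same shape. -/
theorem generalized_RS_bijective (n : ℕ) (hn : 1 ≤ n) :
    Set.BijOn (fun π => (Atab n π, Btab n π)) (Wset n)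
      {p : (Tab × Tab) × (Tab × Tab) |
        IsNStdBitab n p.1 ∧ IsNStdBitab n p.2 ∧ shape2 p.1 = shape2 p.2} := by
  have hmap : ∀ π : P, (Atab n π, Btab n π) = GRS.RSf (fun i => π i) n := by
    intro π
    rw [← GRS.RSfull_eq]
    rfl
  have hz : ∀ L : List ℕ, L.Perm (List.range' 1 n) → 0 ∉ L := by
    intro L hL h0
    have := hL.subset h0
    simp at this
  refine ⟨?_, ?_, ?_⟩
  · intro π hπ
    have h1 := GRS.RSf_inv (GRS.W_nodup hπ)
    have h2 := GRS.W_vals hπ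
    show _ ∧ _ ∧ _
    rw [← GRS.inv_iff n (Atab n π, Btab n π), hmap]
    exact ⟨h1.1, h1.2.1, h1.2.2.1.trans h2, h1.2.2.2⟩
  · intro π hπ σ hσ e
    simp only [hmap] at e
    have h1 := GRS.RSf_inj (GRS.W_nodup hπ) (GRS.W_nodup hσ) (hz _ (GRS.W_vals hπ))
      (hz _ (GRS.W_vals hσ)) e
    ext i
    by_cases hi : (n : ℤ) < |i|
    · rw [hπ.2 i hi, hσ.2 i hi]
    · rw [Int.abs_eq_natAbs] at hi
      by_cases h0 : i = 0
      · rw [h0, GRS.W_zero hπ, GRS.W_zero hσ]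
      · have h2 := h1 i.natAbs (by omega) (by omega)
        rcases Int.natAbs_eq i with h3 | h3
        · rw [h3, h2]
        · rw [h3, hπ.1, hσ.1, h2]
  · intro p hp
    have hI := (GRS.inv_iff n p).2 hp
    obtain ⟨f, f1, f2⟩ := GRS.RSf_surj hI List.nodup_range' (hz _ (List.Perm.refl _))
    obtain ⟨π, hπ, h1⟩ := GRS.exists_perm f2
    refine ⟨π, hπ, ?_⟩
    simp only [hmap]
    rw [← f1]
    refine GRS.RSf_congr ?_
    intro i hi hi'
    exact h1 i hi hi'
end

section
/- For every π ∈ W_n one has A_n(π^{−1}) = B_n(π) and B_n(π^{−1}) = A_n(π). -/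
open scoped Classical

/-- add label `m` in row `o` (if any) -/
def plOpt (m : ℕ) : Option ℕ → Tab → Tab
  | none, T => T
  | some r, T => place m (r, 0) T

theorem place_fst (m : ℕ) (p : ℕ × ℕ) (T : Tab) : place m p T = place m (p.1, 0) T := rfl

/-- insertion tableau of the first `i` positions restricted to values `≤ j` -/
def PT (f : ℕ → Option ℕ) : ℕ → ℕ → Tab
  | 0, _ => []
  | i + 1, j =>
    match f (i + 1) with
    | none => PT f i j
    | some v => if v ≤ j then (insTab v (PT f i j)).1 else PT f i j

/-- row of the box created at step `i + 1` -/
def Cc (f : ℕ → Option ℕ) (i j : ℕ) : Option ℕ :=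
  match f (i + 1) with
  | none => none
  | some v => if v ≤ j then some (insTab v (PT f i j)).2.1 else none

/-- the recording tableau -/
def QT (f : ℕ → Option ℕ) : ℕ → ℕ → Tab
  | 0, _ => []
  | i + 1, j => plOpt (i + 1) (Cc f i j) (QT f i j)

/-- the local rule -/
def rule : Option ℕ → Option ℕ → Option ℕ
  | some r, some k => if r = k then some (k + 1) else some r
  | a, _ => a

theorem place_zero_cons (m c : ℕ) (row : List ℕ) (T : Tab) :
    place m (0, c) (row :: T) = (row ++ [m]) :: T := by
  simp [place]

theorem place_succ_cons (m r c : ℕ) (row : List ℕ) (T : Tab) :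
    place m (r + 1, c) (row :: T) = row :: place m (r, c) T := by
  unfold place
  by_cases h : r < T.length <;> simp [h]

theorem insRow_none (x : ℕ) (row : List ℕ) (h : (insRow x row).2 = none) :
    (insRow x row).1 = row ++ [x] ∧ ∀ y ∈ row, y ≤ x := by
  induction row with
  | nil => simp [insRow]
  | cons y ys ih =>
    unfold insRow at h ⊢
    by_cases hxy : x < y
    · simp [hxy] at h
    · simp only [hxy, if_false] at h ⊢
      obtain ⟨h1, h2⟩ := ih h
      simp [h1]
      exact ⟨by omega, h2⟩

theorem insRow_big (x m : ℕ) (hm : x < m) (row : List ℕ) (h : (insRow x row).2 = none) :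
    insRow x (row ++ [m]) = (row ++ [x], some m) := by
  induction row with
  | nil => simp [insRow, hm]
  | cons y ys ih =>
    unfold insRow at h
    by_cases hxy : x < y
    · simp [hxy] at h
    · simp only [hxy, if_false] at h
      simp [insRow, hxy, ih h]

theorem insRow_some (x m b : ℕ) (row : List ℕ) (h : (insRow x row).2 = some b) :
    insRow x (row ++ [m]) = ((insRow x row).1 ++ [m], some b) ∧ b ∈ row := by
  induction row with
  | nil => simp [insRow] at h
  | cons y ys ih =>
    unfold insRow at h
    by_cases hxy : x < y
    · simp [hxy] at h
      subst h
      simp [insRow, hxy]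
    · simp only [hxy, if_false] at h
      obtain ⟨h1, h2⟩ := ih h
      simp [insRow, hxy, h1, h2]

theorem insRow_mem (x : ℕ) (row : List ℕ) :
    ∀ y ∈ (insRow x row).1, y = x ∨ y ∈ row := by
  induction row with
  | nil => simp [insRow]
  | cons y ys ih =>
    unfold insRow
    by_cases hxy : x < y
    · simp [hxy]; intro a ha; simp [ha]
    · simp only [hxy, if_false]
      intro a ha
      simp only [List.mem_cons] at ha ⊢
      rcases ha with rfl | ha
      · simp
      · rcases ih a ha with h | h <;> simp [h]

theorem insRow_ge (x : ℕ) (row : List ℕ) (h : ∀ y ∈ row, y < x) :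
    insRow x row = (row ++ [x], none) := by
  induction row with
  | nil => simp [insRow]
  | cons y ys ih =>
    have h1 := h y (by simp)
    have h2 := ih (fun z hz => h z (by simp [hz]))
    have : ¬ x < y := by omega
    simp [insRow, this, h2]

theorem insTab_cons_none (x : ℕ) (row : List ℕ) (T : Tab) (h : (insRow x row).2 = none) :
    insTab x (row :: T) = ((row ++ [x]) :: T, 0, row.length) := by
  have := (insRow_none x row h).1
  rw [insTab]
  simp only [h, this]

theorem insTab_cons_some (x b : ℕ) (row : List ℕ) (T : Tab) (h : (insRow x row).2 = some b) :
    insTab x (row :: T) = ((insRow x row).1 :: (insTab b T).1,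
      (insTab b T).2.1 + 1, (insTab b T).2.2) := by
  rw [insTab]
  simp only [h]

/-- all entries are less than `m` -/
def AllLt (m : ℕ) (T : Tab) : Prop := ∀ row ∈ T, ∀ y ∈ row, y < m

theorem insTab_max (m : ℕ) (T : Tab) (h : AllLt m T) :
    (insTab m T).1 = place m (0, 0) T ∧ (insTab m T).2.1 = 0 := by
  cases T with
  | nil => simp [insTab, place]
  | cons row T =>
    have h1 := insRow_ge m row (h row (by simp))
    rw [insTab_cons_none _ _ _ (by rw [h1]), place_zero_cons]
    simp

theorem insTab_allLt (m : ℕ) (T : Tab) : ∀ (x : ℕ), x < m → AllLt m T →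
    AllLt m (insTab x T).1 := by
  induction T with
  | nil => intro x hx _; simpa [insTab, AllLt] using hx
  | cons row T ih =>
    intro x hx h
    have hT : AllLt m T := fun r hr => h r (by simp [hr])
    have hrow := h row (by simp)
    cases hb : (insRow x row).2 with
    | none =>
      rw [insTab_cons_none _ _ _ hb]
      intro r hr y hy
      simp only [List.mem_cons] at hr
      rcases hr with rfl | hr
      · simp at hy
        rcases hy with hy | rfl
        · exact hrow y hy
        · exact hx
      · exact hT r hr y hy
    | some b =>
      rw [insTab_cons_some _ _ _ _ hb]
      have hbm := hrow b (insRow_some x 0 b row hb).2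
      intro r hr y hy
      simp only [List.mem_cons] at hr
      rcases hr with rfl | hr
      · rcases insRow_mem x row y hy with rfl | hy
        · exact hx
        · exact hrow y hy
      · exact ih b hbm hT r hr y hy

/-- The key lemma: insertion versus a maximal entry. -/
theorem insTab_place (m : ℕ) (T : Tab) : ∀ (x r : ℕ), x < m → AllLt m T → r ≤ T.length →
    ∃ r' k', rule (some r) (some (insTab x T).2.1) = some r' ∧
      rule (some (insTab x T).2.1) (some r) = some k' ∧
      (insTab x (place m (r, 0) T)).1 = place m (r', 0) (insTab x T).1 ∧
      (insTab x (place m (r, 0) T)).2.1 = k' ∧ r' ≤ (insTab x T).1.length := by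
  induction T with
  | nil =>
    intro x r hx _ hr
    have : r = 0 := by simpa using hr
    subst this
    refine ⟨1, 1, ?_⟩
    simp [insTab, rule, place, insRow, hx]
  | cons row T ih =>
    intro x r hx h hr
    have hT : AllLt m T := fun r hr => h r (by simp [hr])
    have hrow := h row (by simp)
    cases hb : (insRow x row).2 with
    | none =>
      rw [insTab_cons_none _ _ _ hb]
      cases r with
      | zero =>
        refine ⟨1, 1, by simp [rule], by simp [rule], ?_⟩
        have h1 := insRow_big x m hx row hb
        rw [place_zero_cons, insTab_cons_some x m _ _ (by rw [h1]), h1,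
          place_succ_cons]
        have := insTab_max m T hT
        simp [this]
      | succ r =>
        refine ⟨r + 1, 0, by simp [rule], by simp [rule], ?_⟩
        rw [place_succ_cons, insTab_cons_none _ _ _ hb, place_succ_cons]
        simpa using hr
    | some b =>
      have hbm := hrow b (insRow_some x m b row hb).2
      rw [insTab_cons_some _ _ _ _ hb]
      cases r with
      | zero =>
        refine ⟨0, (insTab b T).2.1 + 1, by simp [rule], by simp [rule], ?_⟩
        have h1 := (insRow_some x m b row hb).1
        rw [place_zero_cons, insTab_cons_some x b _ _ (by rw [h1]), h1,
          place_zero_cons]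
        simp
      | succ r =>
        obtain ⟨r', k', h1, h2, h3, h4, h5⟩ := ih b r hbm hT (by simpa using hr)
        refine ⟨r' + 1, k' + 1, ?_, ?_, ?_⟩
        · simp only [rule] at h1 ⊢
          split_ifs at h1 ⊢ <;> simp_all
        · simp only [rule] at h2 ⊢
          split_ifs at h2 ⊢ <;> simp_all
        · rw [place_succ_cons, insTab_cons_some _ _ _ _ hb, place_succ_cons]
          simp [h3, h4, h5]

theorem PT_allLt (f : ℕ → Option ℕ) (i j : ℕ) : AllLt (j + 1) (PT f i j) := by
  induction i with
  | zero => simp [PT, AllLt]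
  | succ i ih =>
    rw [PT]
    cases f (i + 1) with
    | none => exact ih
    | some v =>
      dsimp only
      split_ifs with hv
      · exact insTab_allLt _ _ _ (by omega) ih
      · exact ih

/-- the induction hypothesis -/
def Hyp (f g : ℕ → Option ℕ) (i j : ℕ) : Prop :=
  PT f i (j + 1) = plOpt (j + 1) (Cc g j i) (PT f i j) ∧
    ∀ r, Cc g j i = some r → r ≤ (PT f i j).length

theorem local_point (f g : ℕ → Option ℕ) (hfg : ∀ i v, f i = some v ↔ g v = some i)
    (i j : ℕ) (H : Hyp f g i j) (hp : f (i + 1) = some (j + 1)) :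
    Cc f i (j + 1) = some 0 ∧
      PT f (i + 1) (j + 1) = plOpt (j + 1) (some 0) (PT f (i + 1) j) := by
  have hC : Cc g j i = none := by
    simp [Cc, (hfg _ _).1 hp]
  have h1 := H.1
  rw [hC] at h1
  simp only [plOpt] at h1
  have h2 := insTab_max (j + 1) (PT f i j) (PT_allLt f i j)
  simp [Cc, PT, hp, h1, h2, plOpt]

theorem local_rule (f g : ℕ → Option ℕ)
    (i j : ℕ) (H : Hyp f g i j) (hp : f (i + 1) ≠ some (j + 1)) :
    Cc f i (j + 1) = rule (Cc f i j) (Cc g j i) ∧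
      PT f (i + 1) (j + 1) = plOpt (j + 1) (rule (Cc g j i) (Cc f i j)) (PT f (i + 1) j) ∧
      ∀ r, rule (Cc g j i) (Cc f i j) = some r → r ≤ (PT f (i + 1) j).length := by
  obtain ⟨h1, h2⟩ := H
  have r1 : ∀ a, rule a none = a := by intro a; cases a <;> rfl
  have r2 : ∀ a, rule none a = none := by intro a; rfl
  cases hf : f (i + 1) with
  | none =>
    have e1 : Cc f i (j + 1) = none := by simp [Cc, hf]
    have e2 : Cc f i j = none := by simp [Cc, hf]
    have e3 : ∀ j, PT f (i + 1) j = PT f i j := by intro j; simp [PT, hf]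
    rw [e1, e2, e3, e3, r1, r2]
    exact ⟨rfl, h1, h2⟩
  | some v =>
    have hv : v ≠ j + 1 := by rintro rfl; exact hp hf
    by_cases hvj : v ≤ j
    · have hvj' : v ≤ j + 1 := by omega
      have e1 : Cc f i (j + 1) = some (insTab v (PT f i (j + 1))).2.1 := by simp [Cc, hf, hvj']
      have e2 : Cc f i j = some (insTab v (PT f i j)).2.1 := by simp [Cc, hf, hvj]
      have e3 : PT f (i + 1) j = (insTab v (PT f i j)).1 := by simp [PT, hf, hvj]
      have e4 : PT f (i + 1) (j + 1) = (insTab v (PT f i (j + 1))).1 := by simp [PT, hf, hvj']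
      rw [e1, e2, e3, e4]
      cases hC : Cc g j i with
      | none =>
        rw [hC] at h1
        simp only [plOpt] at h1
        rw [r1, r2, h1]
        simp [plOpt]
      | some r =>
        obtain ⟨r', k', a1, a2, a3, a4, a5⟩ := insTab_place (j + 1) (PT f i j) v r (by omega)
          (PT_allLt f i j) (h2 r hC)
        rw [hC] at h1
        simp only [plOpt] at h1
        rw [a1, a2, h1, a3, a4]
        refine ⟨rfl, rfl, ?_⟩
        intro r hr
        cases hr
        exact a5
    · have hvj' : ¬ v ≤ j + 1 := by omega
      have e1 : Cc f i (j + 1) = none := by simp [Cc, hf, hvj']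
      have e2 : Cc f i j = none := by simp [Cc, hf, hvj]
      have e3 : PT f (i + 1) j = PT f i j := by simp [PT, hf, hvj]
      have e4 : PT f (i + 1) (j + 1) = PT f i (j + 1) := by simp [PT, hf, hvj']
      rw [e1, e2, e3, e4, r1, r2]
      exact ⟨rfl, h1, h2⟩

theorem hyp_step (f g : ℕ → Option ℕ) (hfg : ∀ i v, f i = some v ↔ g v = some i)
    (i j : ℕ) (H : Hyp f g i j) (H' : Hyp g f j i) : Hyp f g (i + 1) j := by
  by_cases hp : f (i + 1) = some (j + 1)
  · have hp' := (hfg _ _).1 hp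
    have a := local_point f g hfg i j H hp
    have b := local_point g f (fun i v => (hfg v i).symm) j i H' hp'
    refine ⟨?_, ?_⟩
    · rw [b.1]; exact a.2
    · rw [b.1]; intro r hr; cases hr; omega
  · have hp' : g (j + 1) ≠ some (i + 1) := fun h => hp ((hfg _ _).2 h)
    have a := local_rule f g i j H hp
    have b := local_rule g f j i H' hp'
    refine ⟨?_, ?_⟩
    · rw [b.1]; exact a.2.1
    · rw [b.1]; exact a.2.2

theorem Cc_zero (f : ℕ → Option ℕ) (hf : ∀ i, f i ≠ some 0) (i : ℕ) : Cc f i 0 = none := by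
  unfold Cc
  cases h : f (i + 1) with
  | none => rfl
  | some v =>
    have : ¬ v ≤ 0 := by
      intro hv
      have : v = 0 := by omega
      subst this
      exact hf _ h
    simp only [this, if_false]

theorem PT_zero (f : ℕ → Option ℕ) (hf : ∀ i, f i ≠ some 0) (i : ℕ) : PT f i 0 = [] := by
  induction i with
  | zero => rfl
  | succ i ih =>
    rw [PT]
    cases h : f (i + 1) with
    | none => exact ih
    | some v =>
      have : ¬ v ≤ 0 := by
        intro hv
        have : v = 0 := by omega
        subst this
        exact hf _ h
      simp only [this, if_false, ih]

theorem hyp_base (f g : ℕ → Option ℕ) (hg : ∀ i, g i ≠ some 0) (j : ℕ) : Hyp f g 0 j := by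
  unfold Hyp
  rw [Cc_zero g hg]
  exact ⟨rfl, by simp⟩

theorem hyp_all (f g : ℕ → Option ℕ) (hfg : ∀ i v, f i = some v ↔ g v = some i)
    (hf : ∀ i, f i ≠ some 0) (hg : ∀ i, g i ≠ some 0) (i : ℕ) : ∀ j, Hyp f g i j := by
  induction i with
  | zero => exact hyp_base f g hg
  | succ i ih =>
    have key : ∀ j, Hyp g f j i := by
      intro j
      induction j with
      | zero => exact hyp_base g f hf i
      | succ j ihj => exact hyp_step g f (fun i v => (hfg v i).symm) j i ihj (ih j)
    exact fun j => hyp_step f g hfg i j (ih j) (key j)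

theorem PT_eq_QT (f g : ℕ → Option ℕ) (hfg : ∀ i v, f i = some v ↔ g v = some i)
    (hf : ∀ i, f i ≠ some 0) (hg : ∀ i, g i ≠ some 0) (i j : ℕ) : PT f i j = QT g j i := by
  induction j with
  | zero => rw [PT_zero f hf]; rfl
  | succ j ih => rw [(hyp_all f g hfg hf hg i j).1, QT, ih]

/-- positive part -/
def fpos (π : P) (i : ℕ) : Option ℕ :=
  if 0 < i ∧ 0 < π (i : ℤ) then some (π (i : ℤ)).natAbs else none

/-- negative part -/
def fneg (π : P) (i : ℕ) : Option ℕ :=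
  if 0 < i ∧ π (i : ℤ) < 0 then some (π (i : ℤ)).natAbs else none

theorem fpos_iff (π : P) (i v : ℕ) :
    fpos π i = some v ↔ 0 < i ∧ 0 < v ∧ π (i : ℤ) = v := by
  unfold fpos
  split_ifs with h
  · simp only [Option.some.injEq]; omega
  · simp only [reduceCtorEq, false_iff]; omega

theorem fneg_iff (π : P) (i v : ℕ) :
    fneg π i = some v ↔ 0 < i ∧ 0 < v ∧ π (i : ℤ) = -v := by
  unfold fneg
  split_ifs with h
  · simp only [Option.some.injEq]; omega
  · simp only [reduceCtorEq, false_iff]; omega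

theorem fpos_inv (π : P) (i v : ℕ) : fpos π i = some v ↔ fpos π⁻¹ v = some i := by
  rw [fpos_iff, fpos_iff, Equiv.Perm.inv_eq_iff_eq]
  constructor <;> rintro ⟨a, b, c⟩ <;> exact ⟨b, a, c.symm⟩

theorem fneg_inv (π : P) (hπ : ∀ i : ℤ, π (-i) = - π i) (i v : ℕ) :
    fneg π i = some v ↔ fneg π⁻¹ v = some i := by
  rw [fneg_iff, fneg_iff, Equiv.Perm.inv_eq_iff_eq, hπ]
  constructor <;> rintro ⟨a, b, c⟩ <;> exact ⟨b, a, by omega⟩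

theorem W_bound (n : ℕ) (π : P) (hπ : π ∈ Wset n) (i : ℕ) (hi : i ≤ n) :
    (π (i : ℤ)).natAbs ≤ n := by
  by_contra hlt
  have h1 : π (π i) = π i := hπ.2 _ (by rw [Int.abs_eq_natAbs]; omega)
  have h2 := π.injective h1
  rw [h2] at hlt
  simp at hlt
  omega

theorem W_ne_zero (n : ℕ) (π : P) (hπ : π ∈ Wset n) (i : ℕ) (hi : 0 < i) : π (i : ℤ) ≠ 0 := by
  have h0 : π 0 = 0 := by have := hπ.1 0; simp at this; omega
  intro h
  have := π.injective (h.trans h0.symm)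
  omega

theorem RS_eq (n : ℕ) (π : P) (hπ : π ∈ Wset n) (m : ℕ) (hm : m ≤ n) :
    RSfull m π = ((PT (fpos π) m n, PT (fneg π) m n), (QT (fpos π) m n, QT (fneg π) m n)) := by
  induction m with
  | zero => rfl
  | succ m ih =>
    have e : RSfull (m + 1) π = RSstep π (RSfull m π) (m + 1) := by
      simp [RSfull, List.range_succ]
    rw [e, ih (by omega)]
    have hb := W_bound n π hπ (m + 1) hm
    have h0 := W_ne_zero n π hπ (m + 1) (by omega)
    by_cases hs : 0 < π ((m + 1 : ℕ) : ℤ)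
    · have e1 : fpos π (m + 1) = some (π ((m + 1 : ℕ) : ℤ)).natAbs := if_pos ⟨by omega, hs⟩
      have e2 : fneg π (m + 1) = none := if_neg (by omega)
      simp only [RSstep, if_pos hs, PT, QT, Cc, e1, e2, if_pos hb, plOpt]
      rw [place_fst]
    · have e1 : fneg π (m + 1) = some (π ((m + 1 : ℕ) : ℤ)).natAbs :=
        if_pos ⟨by omega, by omega⟩
      have e2 : fpos π (m + 1) = none := if_neg (by omega)
      simp only [RSstep, if_neg hs, PT, QT, Cc, e1, e2, if_pos hb, plOpt]
      rw [place_fst]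

theorem W_inv (n : ℕ) (π : P) (hπ : π ∈ Wset n) : π⁻¹ ∈ Wset n := by
  refine ⟨fun i => ?_, fun i hi => ?_⟩
  · rw [Equiv.Perm.inv_eq_iff_eq, hπ.1]; simp
  · rw [Equiv.Perm.inv_eq_iff_eq, hπ.2 i hi]

theorem Atab_eq_Btab (n : ℕ) (π : P) (hπ : π ∈ Wset n) : Atab n π = Btab n π⁻¹ := by
  have p0 : ∀ (σ : P) i, fpos σ i ≠ some 0 := by
    intro σ i h; rw [fpos_iff] at h; omega
  have n0 : ∀ (σ : P) i, fneg σ i ≠ some 0 := by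
    intro σ i h; rw [fneg_iff] at h; omega
  rw [Atab, Btab, RS_eq n π hπ n le_rfl, RS_eq n π⁻¹ (W_inv n π hπ) n le_rfl]
  dsimp only
  rw [PT_eq_QT (fpos π) (fpos π⁻¹) (fpos_inv π) (p0 _) (p0 _),
    PT_eq_QT (fneg π) (fneg π⁻¹) (fneg_inv π hπ.1) (n0 _) (n0 _)]

/-- For every `π ∈ W_n`, `A_n(π⁻¹) = B_n(π)` and `B_n(π⁻¹) = A_n(π)`. -/
theorem RS_of_inverse (n : ℕ) (hn : 1 ≤ n) (π : P) (hπ : π ∈ Wset n) :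
    Atab n π⁻¹ = Btab n π ∧ Btab n π⁻¹ = Atab n π := by
  refine ⟨?_, (Atab_eq_Btab n π hπ).symm⟩
  have := Atab_eq_Btab n π⁻¹ (W_inv n π hπ)
  rwa [inv_inv] at this
end

section
/- The number of generalized Robinson–Schensted cells of W_n, i.e. the number of distinct values taken by the map π ↦ B_n(π) on W_n, equals the number of elements w ∈ W_n with w² = 1. -/
open scoped Classical

namespace RSC
abbrev Sh := Multiset (Bool × ℕ)

def Anti (F : Sh) : Prop := ∀ b r, F.count (b, r + 1) ≤ F.count (b, r)

def remC (F : Sh) : Finset (Bool × ℕ) :=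
  F.toFinset.filter (fun p => F.count (p.1, p.2 + 1) < F.count p)

def addC (F : Sh) : Finset (Bool × ℕ) :=
  (remC F).image (fun p => (p.1, p.2 + 1)) ∪ {(true, 0), (false, 0)}

theorem mem_remC (F : Sh) (p : Bool × ℕ) :
    p ∈ remC F ↔ F.count (p.1, p.2 + 1) < F.count p := by
  unfold remC
  rw [Finset.mem_filter, Multiset.mem_toFinset]
  constructor
  · exact fun h => h.2
  · intro h
    exact ⟨Multiset.count_pos.mp (by omega), h⟩

theorem mem_addC_zero (F : Sh) (b : Bool) : (b, 0) ∈ addC F := by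
  unfold addC
  cases b <;> simp

theorem mem_addC_succ (F : Sh) (b : Bool) (r : ℕ) :
    (b, r + 1) ∈ addC F ↔ F.count (b, r + 1) < F.count (b, r) := by
  unfold addC
  simp only [Finset.mem_union, Finset.mem_image, mem_remC]
  constructor
  · rintro (⟨⟨b', r'⟩, h, e⟩ | h)
    · simp only [Prod.mk.injEq, Nat.add_right_cancel_iff] at e
      obtain ⟨rfl, rfl⟩ := e
      exact h
    · simp at h
  · intro h
    exact Or.inl ⟨(b, r), h, rfl⟩

theorem card_addC (F : Sh) : (addC F).card = (remC F).card + 2 := by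
  unfold addC
  rw [Finset.card_union_of_disjoint, Finset.card_image_of_injective]
  · rfl
  · rintro ⟨a, b⟩ ⟨c, d⟩ h
    simpa using h
  · rw [Finset.disjoint_left]
    intro p hp
    simp only [Finset.mem_image] at hp
    obtain ⟨q, _, rfl⟩ := hp
    simp

theorem Anti.add {F : Sh} (hF : Anti F) {i} (hi : i ∈ addC F) : Anti (i ::ₘ F) := by
  intro b r
  obtain ⟨c, s⟩ := i
  have h := hF b r
  rw [Multiset.count_cons, Multiset.count_cons]
  by_cases e : (b, r + 1) = (c, s)
  · rw [← e, mem_addC_succ] at hi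
    have e2 : ¬ (b, r) = (c, s) := by
      rw [← e]; simp
    rw [if_pos e, if_neg e2]
    omega
  · rw [if_neg e]
    split_ifs <;> omega

def U (g : Sh → ℕ) (F : Sh) : ℕ := ∑ i ∈ addC F, g (i ::ₘ F)
def D (g : Sh → ℕ) (F : Sh) : ℕ := ∑ i ∈ remC F, g (F.erase i)

theorem exch {F : Sh} {i j : Bool × ℕ} (hij : i ≠ j) :
    (i ∈ addC F ∧ j ∈ remC (i ::ₘ F)) ↔ (j ∈ remC F ∧ i ∈ addC (F.erase j)) := by
  obtain ⟨b, r⟩ := i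
  obtain ⟨c, s⟩ := j
  rw [mem_remC, mem_remC]
  cases r with
  | zero =>
    simp only [mem_addC_zero, true_and, and_true]
    rw [Multiset.count_cons_of_ne (Ne.symm hij), Multiset.count_cons_of_ne (by simp)]
  | succ r =>
    rw [mem_addC_succ, mem_addC_succ]
    rw [Multiset.count_cons_of_ne (Ne.symm hij), Multiset.count_erase_of_ne hij]
    by_cases e : (b, r) = (c, s)
    · simp only [Prod.mk.injEq] at e
      obtain ⟨rfl, rfl⟩ := e
      simp only [Multiset.count_cons_self, Multiset.count_erase_self]
      omega
    · rw [Multiset.count_erase_of_ne e, Multiset.count_cons_of_ne]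
      · tauto
      · intro h
        apply e
        simp only [Prod.mk.injEq, Nat.add_right_cancel_iff] at h ⊢
        tauto

theorem comm_UD (g : Sh → ℕ) (F : Sh) (hF : Anti F) :
    U (D g) F = D (U g) F + 2 * g F := by
  have h1 : U (D g) F = (addC F).card * g F +
      ∑ i ∈ addC F, ∑ j ∈ (remC (i ::ₘ F)).erase i, g (i ::ₘ F.erase j) := by
    unfold U D
    rw [← smul_eq_mul, ← Finset.sum_const, ← Finset.sum_add_distrib]
    refine Finset.sum_congr rfl fun i hi => ?_
    have hm : i ∈ remC (i ::ₘ F) := by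
      rw [mem_remC, Multiset.count_cons_self, Multiset.count_cons_of_ne]
      · exact Nat.lt_succ_of_le (hF _ _)
      · intro h
        have := congrArg Prod.snd h
        simp at this
    rw [← Finset.add_sum_erase _ _ hm, Multiset.erase_cons_head]
    congr 1
    refine Finset.sum_congr rfl fun j hj => ?_
    rw [Multiset.erase_cons_tail]
    exact (Finset.ne_of_mem_erase hj).symm
  have h2 : D (U g) F = (remC F).card * g F +
      ∑ j ∈ remC F, ∑ i ∈ (addC (F.erase j)).erase j, g (i ::ₘ F.erase j) := by
    unfold U D
    rw [← smul_eq_mul, ← Finset.sum_const, ← Finset.sum_add_distrib]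
    refine Finset.sum_congr rfl fun j hj => ?_
    rw [mem_remC] at hj
    have hm : j ∈ addC (F.erase j) := by
      obtain ⟨c, s⟩ := j
      cases s with
      | zero => exact mem_addC_zero _ _
      | succ s =>
        rw [mem_addC_succ, Multiset.count_erase_self, Multiset.count_erase_of_ne (by simp)]
        have := hF c s
        omega
    beta_reduce
    rw [← Finset.add_sum_erase _ _ hm, Multiset.cons_erase]
    exact Multiset.count_pos.mp (by omega)
  have h3 : ∑ i ∈ addC F, ∑ j ∈ (remC (i ::ₘ F)).erase i, g (i ::ₘ F.erase j) =
      ∑ j ∈ remC F, ∑ i ∈ (addC (F.erase j)).erase j, g (i ::ₘ F.erase j) := by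
    apply Finset.sum_comm'
    intro i j
    simp only [Finset.mem_erase]
    by_cases hij : i = j
    · simp [hij]
    · have := exch (F := F) hij
      have h' : j ≠ i := Ne.symm hij
      tauto
  rw [h1, h2, h3, card_addC]
  ring

def cnt : ℕ → Sh → ℕ
  | 0 => fun _ => 1
  | k + 1 => U (cnt k)

theorem U_congr {g h : Sh → ℕ} (H : ∀ F, Anti F → g F = h F) (F) (hF : Anti F) :
    U g F = U h F := by
  refine Finset.sum_congr rfl fun i hi => H _ (hF.add hi)

theorem U_add (g h : Sh → ℕ) (F) : U (fun F => g F + h F) F = U g F + U h F :=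
  Finset.sum_add_distrib

theorem U_mul (c : ℕ) (g : Sh → ℕ) (F) : U (fun F => c * g F) F = c * U g F :=
  (Finset.mul_sum _ _ _).symm

theorem cnt_D (k : ℕ) : ∀ F, Anti F →
    cnt (k + 1) F = 2 * cnt k F + D (cnt k) F + 2 * k * cnt (k - 1) F := by
  induction k with
  | zero =>
    intro F hF
    simp [cnt, U, D, card_addC]
    ring
  | succ k ih =>
    intro F hF
    rw [cnt, U_congr ih F hF, U_add, U_add, U_mul, U_mul, comm_UD _ _ hF]
    cases k with
    | zero => simp [cnt]; ring
    | succ k =>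
      simp only [Nat.add_sub_cancel]
      rw [show U (cnt k) = cnt (k + 1) from rfl, show U (cnt (k + 1)) = cnt (k + 1 + 1) from rfl]
      ring

def aSeq (n : ℕ) : ℕ := cnt n 0

theorem aSeq_zero : aSeq 0 = 1 := rfl
theorem aSeq_succ (n : ℕ) : aSeq (n + 1) = 2 * aSeq n + 2 * n * aSeq (n - 1) := by
  unfold aSeq
  rw [cnt_D n 0 (fun _ _ => by simp)]
  simp [D, remC]

def Rset : ℕ → Finset (List (Bool × ℕ))
  | 0 => {[]}
  | m + 1 => (Rset m).biUnion (fun l => (addC (l : Sh)).image (fun i => i :: l))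

theorem sum_Rset (m : ℕ) (f : Sh → ℕ) : ∑ l ∈ Rset (m + 1), f (l : Sh) = ∑ l ∈ Rset m, U f (l : Sh) := by
  rw [Rset, Finset.sum_biUnion]
  · refine Finset.sum_congr rfl fun l hl => ?_
    rw [Finset.sum_image]
    · rfl
    · intro a _ b _ h
      simpa using h
  · intro a _ b _ hab
    rw [Function.onFun, Finset.disjoint_left]
    intro x hx hy
    rw [Finset.mem_image] at hx hy
    obtain ⟨i, _, rfl⟩ := hx
    obtain ⟨j, _, h⟩ := hy
    simp only [List.cons.injEq] at h
    exact hab h.2.symm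

theorem sum_Rset_cnt (m : ℕ) : ∀ k, ∑ l ∈ Rset m, cnt k (l : Sh) = cnt (m + k) 0 := by
  induction m with
  | zero => intro k; simp [Rset]
  | succ m ih =>
    intro k
    rw [sum_Rset, show m + 1 + k = m + (k + 1) by ring, ← ih (k + 1)]
    rfl

theorem card_Rset (n : ℕ) : (Rset n).card = aSeq n := by
  have := sum_Rset_cnt n 0
  simpa [cnt, aSeq] using this

def ValidR : List (Bool × ℕ) → Prop
  | [] => True
  | i :: l => ValidR l ∧ i ∈ addC (l : Sh)

theorem mem_Rset (n : ℕ) : ∀ l, l ∈ Rset n ↔ l.length = n ∧ ValidR l := by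
  induction n with
  | zero =>
    intro l
    simp only [Rset, Finset.mem_singleton, List.length_eq_zero_iff]
    constructor
    · rintro rfl; exact ⟨rfl, trivial⟩
    · exact fun h => h.1
  | succ n ih =>
    intro l
    simp only [Rset, Finset.mem_biUnion, Finset.mem_image, ih]
    constructor
    · rintro ⟨l', ⟨h1, h2⟩, i, hi, rfl⟩
      exact ⟨by simp [h1], h2, hi⟩
    · cases l with
      | nil => rintro ⟨h, _⟩; simp at h
      | cons i l =>
        rintro ⟨h, h1, h2⟩
        exact ⟨l, ⟨by simpa using h, h1⟩, i, h2, rfl⟩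

theorem ValidR.anti : ∀ {l : List (Bool × ℕ)}, ValidR l → Anti (l : Sh)
  | [], _ => fun _ _ => by simp
  | i :: l, h => by
    rw [← Multiset.cons_coe]
    exact (ValidR.anti h.1).add h.2

end RSC

namespace RSC

def InvS (S : Finset ℤ) : Set P :=
  {w | (∀ i : ℤ, w (-i) = - w i) ∧ (∀ i : ℤ, |i| ∉ S → w i = i) ∧ ∀ i, w (w i) = i}

def tauF (s e i : ℤ) : ℤ :=
  if s = 0 ∨ e = 0 then i else if i = s then e else if i = e then s else if i = -s then -e else if i = -e then -s else i

theorem tauF_inv (s e : ℤ) : Function.Involutive (tauF s e) := by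
  intro i
  unfold tauF
  split_ifs <;> omega

def tau (s e : ℤ) : P := (tauF_inv s e).toPerm

theorem tau_apply (s e i : ℤ) : tau s e i = tauF s e i := rfl

theorem tau_tau (s e i : ℤ) : tau s e (tau s e i) = i := tauF_inv s e i

theorem tau_neg (s e i : ℤ) (hs : s ≠ 0) (he : e ≠ 0) : tau s e (-i) = - tau s e i := by
  rw [tau_apply, tau_apply]
  unfold tauF
  split_ifs <;> omega

theorem tau_off (s e i : ℤ) (h1 : |i| ≠ |s|) (h2 : |i| ≠ |e|) : tau s e i = i := by
  rw [tau_apply]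
  unfold tauF
  rw [Ne, abs_eq_abs] at h1 h2
  split_ifs <;> omega

theorem tau_on (s e i : ℤ) (h : |i| = |s| ∨ |i| = |e|) :
    |tau s e i| = |s| ∨ |tau s e i| = |e| := by
  rw [tau_apply]
  unfold tauF
  split_ifs <;> simp_all

theorem InvS_on {S : Finset ℤ} {s e : ℤ} {w : P} (hw : w ∈ InvS S) (hse : w s = e)
    (hs : s ≠ 0) (he : e ≠ 0)
    (i : ℤ) (h : |i| = |s| ∨ |i| = |e|) : w i = tau s e i := by
  obtain ⟨h1, -, h3⟩ := hw
  have hes : w e = s := by rw [← hse, h3]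
  have hs' := h1 s
  have he' := h1 e
  rw [hse] at hs'
  rw [hes] at he'
  rw [abs_eq_abs, abs_eq_abs] at h
  rw [tau_apply]
  unfold tauF
  rw [if_neg (by omega)]
  split_ifs with a b c d
  · rw [a, hse]
  · rw [b, hes]
  · rw [c, hs']
  · rw [d, he']
  · omega

theorem InvS_image (S : Finset ℤ) (hS : ∀ x ∈ S, 0 < x) (s e : ℤ) (hs : s ∈ S) (he : |e| ∈ S) :
    {w ∈ InvS S | w s = e} = (fun u => tau s e * u) '' InvS ((S.erase s).erase |e|) := by
  have hs0 := hS s hs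
  have hs1 : |s| = s := abs_of_pos hs0
  have he0 : e ≠ 0 := by
    intro h
    have := hS _ he
    simp [h] at this
  have hs0' : s ≠ 0 := by omega
  ext w
  constructor
  · rintro ⟨hw, hse⟩
    have hon := InvS_on hw hse hs0' he0
    obtain ⟨h1, h2, h3⟩ := hw
    have hoff : ∀ i, ¬ (|i| = |s| ∨ |i| = |e|) → ¬ (|w i| = |s| ∨ |w i| = |e|) := by
      intro i hi hc
      apply hi
      have := tau_on s e _ hc
      rw [← hon _ hc, h3] at this
      exact this
    have hu1 : ∀ i, (|i| = |s| ∨ |i| = |e|) → (tau s e * w) i = i := by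
      intro i hi
      rw [Equiv.Perm.mul_apply, hon i hi, tau_tau]
    have hu2 : ∀ i, ¬ (|i| = |s| ∨ |i| = |e|) → (tau s e * w) i = w i := by
      intro i hi
      have := hoff i hi
      push Not at this
      rw [Equiv.Perm.mul_apply, tau_off _ _ _ this.1 this.2]
    refine ⟨tau s e * w, ⟨?_, ?_, ?_⟩, ?_⟩
    · intro i
      rw [Equiv.Perm.mul_apply, h1, tau_neg _ _ _ hs0' he0, Equiv.Perm.mul_apply]
    · intro i hi
      by_cases hc : |i| = |s| ∨ |i| = |e|
      · exact hu1 i hc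
      · rw [hu2 i hc]
        apply h2
        intro h
        apply hi
        push Not at hc
        rw [hs1] at hc
        simp [hc, h]
    · intro i
      by_cases hc : |i| = |s| ∨ |i| = |e|
      · rw [hu1 i hc, hu1 i hc]
      · rw [hu2 i hc, hu2 _ (hoff i hc), h3]
    · ext i
      simp [tau_tau]
  · rintro ⟨u, ⟨h1, h2, h3⟩, rfl⟩
    have hfix : ∀ i, (|i| = |s| ∨ |i| = |e|) → u i = i := by
      intro i hi
      apply h2
      rw [hs1] at hi
      rcases hi with hi | hi <;> simp [hi]
    have hoff : ∀ i, ¬ (|i| = |s| ∨ |i| = |e|) → ¬ (|u i| = |s| ∨ |u i| = |e|) := by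
      intro i hi hc
      apply hi
      have := hfix _ hc
      rw [h3] at this
      rwa [← this] at hc
    have hu1 : ∀ i, (|i| = |s| ∨ |i| = |e|) → (tau s e * u) i = tau s e i := by
      intro i hi
      rw [Equiv.Perm.mul_apply, hfix i hi]
    have hu2 : ∀ i, ¬ (|i| = |s| ∨ |i| = |e|) → (tau s e * u) i = u i := by
      intro i hi
      have := hoff i hi
      push Not at this
      rw [Equiv.Perm.mul_apply, tau_off _ _ _ this.1 this.2]
    refine ⟨⟨?_, ?_, ?_⟩, ?_⟩
    · intro i
      beta_reduce
      rw [Equiv.Perm.mul_apply, h1, tau_neg _ _ _ hs0' he0, Equiv.Perm.mul_apply]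
    · intro i hi
      have hc : ¬ (|i| = |s| ∨ |i| = |e|) := by
        rintro (h | h)
        · rw [h, hs1] at hi; exact hi hs
        · rw [h] at hi; exact hi he
      beta_reduce
      rw [hu2 i hc]
      apply h2
      simp [hi]
    · intro i
      beta_reduce
      by_cases hc : |i| = |s| ∨ |i| = |e|
      · rw [hu1 i hc, hu1 _ (tau_on _ _ _ hc), tau_tau]
      · rw [hu2 i hc, hu2 _ (hoff i hc), h3]
    · beta_reduce
      rw [hu1 s (Or.inl rfl), tau_apply]
      simp [tauF, hs0', he0]

theorem InvS_card (m : ℕ) : ∀ S : Finset ℤ, S.card = m → (∀ x ∈ S, 0 < x) →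
    ∃ X : Finset P, (X : Set P) = InvS S ∧ X.card = aSeq m := by
  induction m using Nat.strong_induction_on with
  | _ m ih =>
  intro S hm hS
  rcases S.eq_empty_or_nonempty with rfl | ⟨s, hs⟩
  · refine ⟨{1}, ?_, ?_⟩
    · ext w
      simp only [Finset.coe_singleton, Set.mem_singleton_iff, InvS, Set.mem_ofPred_eq]
      constructor
      · rintro rfl; simp
      · rintro ⟨-, h, -⟩
        ext i
        simp [h]
    · simp at hm
      rw [← hm, aSeq_zero, Finset.card_singleton]
  · have hpos : 0 < m := by rw [← hm]; exact Finset.card_pos.mpr ⟨s, hs⟩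
    have key : ∀ t ∈ S, ∃ X : Finset P, (X : Set P) = InvS ((S.erase s).erase t) ∧
        X.card = if t = s then aSeq (m - 1) else aSeq (m - 2) := by
      intro t ht
      have hc1 : (S.erase s).card = m - 1 := by rw [Finset.card_erase_of_mem hs, hm]
      have hpos' : ∀ x ∈ (S.erase s).erase t, 0 < x := fun x hx =>
        hS x (Finset.mem_of_mem_erase (Finset.mem_of_mem_erase hx))
      by_cases h : t = s
      · subst h
        rw [if_pos rfl]
        apply ih (m - 1) (by omega) _ _ hpos'
        rw [Finset.erase_eq_of_notMem (by simp), hc1]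
      · rw [if_neg h]
        have hmem : t ∈ S.erase s := Finset.mem_erase.mpr ⟨h, ht⟩
        apply ih (m - 2) (by omega) _ _ hpos'
        rw [Finset.card_erase_of_mem hmem, hc1]
        omega
    choose! X hX1 hX2 using key
    let E : Finset ℤ := S ∪ S.image (fun x => -x)
    have hE : ∀ e, e ∈ E ↔ |e| ∈ S := by
      intro e
      simp only [E, Finset.mem_union, Finset.mem_image]
      rcases abs_choice e with h | h
      · rw [h]
        constructor
        · rintro (h' | ⟨a, ha, hb⟩)
          · exact h'
          · have := hS a ha
            have := abs_nonneg e
            omega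
        · exact Or.inl
      · rw [h]
        constructor
        · rintro (h' | ⟨a, ha, hb⟩)
          · have := hS e h'
            have := abs_nonneg e
            omega
          · rw [← hb]; simpa using ha
        · intro h'
          exact Or.inr ⟨_, h', by simp⟩
    let Y : Finset P := E.biUnion (fun e => (X |e|).image (fun u => tau s e * u))
    have hY : ∀ e ∈ E, (((X |e|).image (fun u => tau s e * u) : Finset P) : Set P) =
        {w ∈ InvS S | w s = e} := by
      intro e he
      rw [InvS_image S hS s e hs ((hE e).mp he), Finset.coe_image, hX1 _ ((hE e).mp he)]
    refine ⟨Y, ?_, ?_⟩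
    · ext w
      simp only [Y, Finset.coe_biUnion, Set.mem_iUnion]
      constructor
      · rintro ⟨e, he, hw⟩
        rw [hY e he] at hw
        exact hw.1
      · intro hw
        have he : w s ∈ E := by
          rw [hE]
          by_contra hc
          have h1 := hw.2.1 _ hc
          rw [hw.2.2] at h1
          rw [← h1, abs_of_pos (hS s hs)] at hc
          exact hc hs
        refine ⟨w s, he, ?_⟩
        rw [hY _ he]
        exact ⟨hw, rfl⟩
    · have hdisj : Disjoint S (S.image (fun x => -x)) := by
        rw [Finset.disjoint_left]
        intro a ha hb
        rw [Finset.mem_image] at hb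
        obtain ⟨b, hb, hab⟩ := hb
        have := hS a ha
        have := hS b hb
        omega
      rw [Finset.card_biUnion]
      · have h1 : ∀ e ∈ E, ((X |e|).image (fun u => tau s e * u)).card =
            if |e| = s then aSeq (m - 1) else aSeq (m - 2) := by
          intro e he
          rw [Finset.card_image_of_injective _ (mul_right_injective _), hX2 _ ((hE e).mp he)]
        rw [Finset.sum_congr rfl h1, Finset.sum_union hdisj, Finset.sum_image (by simp)]
        have h2 : ∑ x ∈ S, (if |x| = s then aSeq (m - 1) else aSeq (m - 2)) =
            aSeq (m - 1) + (m - 1) * aSeq (m - 2) := by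
          rw [← Finset.add_sum_erase _ _ hs, if_pos (abs_of_pos (hS s hs))]
          rw [Finset.sum_congr rfl (g := fun _ => aSeq (m - 2)), Finset.sum_const,
            Finset.card_erase_of_mem hs, hm, smul_eq_mul]
          intro x hx
          rw [Finset.mem_erase] at hx
          rw [abs_of_pos (hS x hx.2), if_neg hx.1]
        simp only [abs_neg]
        rw [h2]
        obtain ⟨k, rfl⟩ : ∃ k, m = k + 1 := ⟨m - 1, by omega⟩
        rw [aSeq_succ, Nat.add_sub_cancel, show k + 1 - 2 = k - 1 by omega]
        ring
      · intro a ha b hb hab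
        rw [Function.onFun, Finset.disjoint_left]
        intro w hw1 hw2
        rw [← Finset.mem_coe, hY a ha] at hw1
        rw [← Finset.mem_coe, hY b hb] at hw2
        exact hab (hw1.2.symm.trans hw2.2)

theorem card_inv (n : ℕ) : {w ∈ Wset n | w * w = 1}.ncard = aSeq n := by
  obtain ⟨X, h1, h2⟩ := InvS_card n (Finset.Icc 1 (n : ℤ)) (by simp)
    (by intro x hx; rw [Finset.mem_Icc] at hx; omega)
  rw [← h2, ← Set.ncard_coe_finset, h1]
  congr 1
  ext w
  simp only [InvS, Wset, Set.mem_ofPred_eq, Finset.mem_Icc, Equiv.ext_iff, Equiv.Perm.mul_apply,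
    Equiv.Perm.one_apply]
  constructor
  · rintro ⟨⟨h1, h2⟩, h3⟩
    refine ⟨h1, ?_, h3⟩
    intro i hi
    by_cases h0 : i = 0
    · subst h0
      have := h1 0
      rw [neg_zero] at this
      omega
    · apply h2
      have : 0 < |i| := abs_pos.mpr h0
      omega
  · rintro ⟨h1, h2, h3⟩
    refine ⟨⟨h1, ?_⟩, h3⟩
    intro i hi
    apply h2
    omega
end RSC

namespace RSC

def Above : List ℕ → List ℕ → Prop
  | _, [] => True
  | [], _ :: _ => False
  | a :: r, c :: s => a < c ∧ Above r s

theorem Above_nil (r : List ℕ) : Above r [] := by cases r <;> trivial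

theorem Above.length_le : ∀ {r s : List ℕ}, Above r s → s.length ≤ r.length
  | _, [], _ => by simp
  | [], _ :: _, h => h.elim
  | a :: r, c :: s, h => by
    have := Above.length_le h.2
    simpa using this

theorem Above.get : ∀ {r s : List ℕ}, Above r s → ∀ {j y : ℕ}, s[j]? = some y →
    ∃ z, r[j]? = some z ∧ z < y
  | _, [], _, j, y, hy => by simp at hy
  | [], _ :: _, h, _, _, _ => h.elim
  | a :: r, c :: s, h, 0, y, hy => by
    simp only [List.getElem?_cons_zero, Option.some.injEq] at hy
    exact ⟨a, by simp, hy ▸ h.1⟩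
  | a :: r, c :: s, h, j + 1, y, hy => by
    simp only [List.getElem?_cons_succ] at hy ⊢
    exact Above.get h.2 hy

def StdT : Tab → Prop
  | [] => True
  | row :: rest => row.Pairwise (· ≤ ·) ∧ Above row (rest.headD []) ∧ StdT rest

theorem insRow_cons (x y : ℕ) (ys : List ℕ) : insRow x (y :: ys) =
    if x < y then (x :: ys, some y) else (y :: (insRow x ys).1, (insRow x ys).2) := by
  rw [insRow]

theorem insRow_mem (x : ℕ) : ∀ row y, y ∈ (insRow x row).1 → y = x ∨ y ∈ row
  | [], y, h => by simpa [insRow] using h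
  | a :: t, y, h => by
    rw [insRow_cons] at h
    split_ifs at h with hx
    · simp only [List.mem_cons] at h ⊢
      tauto
    · simp only [List.mem_cons] at h ⊢
      have := insRow_mem x t y
      tauto

theorem insRow_sorted (x : ℕ) : ∀ row : List ℕ, row.Pairwise (· ≤ ·) →
    (insRow x row).1.Pairwise (· ≤ ·)
  | [], _ => by simp [insRow]
  | a :: t, h => by
    rw [insRow_cons]
    rw [List.pairwise_cons] at h
    split_ifs with hx
    · simp only [List.pairwise_cons]
      refine ⟨fun b hb => ?_, h.2⟩
      have := h.1 b hb
      omega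
    · simp only [List.pairwise_cons]
      refine ⟨fun b hb => ?_, insRow_sorted x t h.2⟩
      rcases insRow_mem x t b hb with h' | h'
      · omega
      · exact h.1 b h'

theorem insRow_lt (x b : ℕ) : ∀ row : List ℕ, (insRow x row).2 = some b → x < b
  | [], h => by simp [insRow] at h
  | a :: t, h => by
    rw [insRow_cons] at h
    split_ifs at h with hx
    · simp only [Option.some.injEq] at h
      omega
    · exact insRow_lt x b t h

theorem insRow_above_left (x : ℕ) : ∀ r s : List ℕ, Above r s → Above (insRow x r).1 s
  | _, [], _ => Above_nil _
  | [], _ :: _, h => h.elim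
  | a :: t, c :: s, h => by
    rw [insRow_cons]
    have h1 := h.1
    split_ifs with hx
    · exact ⟨by omega, h.2⟩
    · exact ⟨h.1, insRow_above_left x t s h.2⟩

theorem insRow_above (x b : ℕ) : ∀ r s : List ℕ, Above r s → (insRow x r).2 = some b →
    Above (insRow x r).1 (insRow b s).1
  | [], _, _, h => by simp [insRow] at h
  | a :: t, s, h, hb => by
    have hlt := insRow_lt x b _ hb
    rw [insRow_cons] at hb ⊢
    split_ifs at hb ⊢ with hx
    · simp only [Option.some.injEq] at hb
      subst hb
      cases s with
      | nil => exact ⟨hx, Above_nil _⟩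
      | cons c s =>
        rw [insRow_cons, if_pos h.1]
        exact ⟨hx, h.2⟩
    · cases s with
      | nil => exact ⟨by omega, Above_nil _⟩
      | cons c s =>
        rw [insRow_cons]
        split_ifs with hc
        · exact ⟨by omega, insRow_above_left x t s h.2⟩
        · exact ⟨h.1, insRow_above x b t s h.2 hb⟩

theorem insRow_length (x : ℕ) : ∀ row : List ℕ, (insRow x row).1.length =
    row.length + if (insRow x row).2 = none then 1 else 0
  | [] => by simp [insRow]
  | a :: t => by
    have := insRow_length x t
    rw [insRow_cons]
    by_cases hx : x < a
    · simp [hx]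
    · simp only [hx, if_false, List.length_cons]
      omega

theorem insTab_none (x : ℕ) (row : List ℕ) (rest : Tab) (h : (insRow x row).2 = none) :
    insTab x (row :: rest) = ((insRow x row).1 :: rest, 0, row.length) := by
  rw [insTab]
  simp only [h]

theorem insTab_some (x b : ℕ) (row : List ℕ) (rest : Tab) (h : (insRow x row).2 = some b) :
    insTab x (row :: rest) = ((insRow x row).1 :: (insTab b rest).1,
      (insTab b rest).2.1 + 1, (insTab b rest).2.2) := by
  rw [insTab]
  simp only [h]

theorem insTab_head (x : ℕ) (T : Tab) :
    (insTab x T).1.headD [] = (insRow x (T.headD [])).1 := by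
  cases T with
  | nil => rfl
  | cons row rest =>
    cases h : (insRow x row).2 with
    | none => rw [insTab_none _ _ _ h]; rfl
    | some b => rw [insTab_some _ _ _ _ h]; rfl

theorem insTab_std : ∀ (T : Tab) (x : ℕ), StdT T → StdT (insTab x T).1
  | [], x, _ => ⟨by simp, trivial, trivial⟩
  | row :: rest, x, hT => by
    cases h : (insRow x row).2 with
    | none =>
      rw [insTab_none _ _ _ h]
      exact ⟨insRow_sorted _ _ hT.1, insRow_above_left _ _ _ hT.2.1, hT.2.2⟩
    | some b =>
      rw [insTab_some _ _ _ _ h]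
      refine ⟨insRow_sorted _ _ hT.1, ?_, insTab_std rest b hT.2.2⟩
      rw [insTab_head]
      exact insRow_above _ _ _ _ hT.2.1 h

theorem insTab_shape : ∀ (T : Tab) (x r : ℕ), ((insTab x T).1.getD r []).length =
    (T.getD r []).length + if r = (insTab x T).2.1 then 1 else 0
  | [], x, r => by cases r <;> simp [insTab]
  | row :: rest, x, r => by
    have hl := insRow_length x row
    cases h : (insRow x row).2 with
    | none =>
      rw [insTab_none _ _ _ h]
      cases r with
      | zero => simpa [h] using hl
      | succ r => simp
    | some b =>
      rw [insTab_some _ _ _ _ h]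
      cases r with
      | zero => simpa [h] using hl
      | succ r => simpa using insTab_shape rest b r

theorem StdT.anti : ∀ {T : Tab}, StdT T → ∀ r, (T.getD (r + 1) []).length ≤ (T.getD r []).length
  | [], _, r => by simp
  | row :: rest, h, 0 => by
    have := h.2.1.length_le
    cases rest with
    | nil => simp
    | cons a t => simpa using this
  | row :: rest, h, r + 1 => by
    have := StdT.anti h.2.2 r
    simpa using this

theorem place_getD (lbl r c : ℕ) (T : Tab) (h : r ≤ T.length) (r' : ℕ) :
    (place lbl (r, c) T).getD r' [] = if r' = r then T.getD r [] ++ [lbl] else T.getD r' [] := by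
  unfold place
  simp only
  split_ifs with h1 h2 h2
  · subst h2
    simp [List.getD_eq_getElem?_getD, h1]
  · simp [List.getD_eq_getElem?_getD, List.getElem?_set_ne (Ne.symm h2)]
  · have : T.length = r := by omega
    subst h2
    simp [List.getD_eq_getElem?_getD, ← this]
  · have h3 : T.length = r := by omega
    subst h3
    simp only [List.getD_eq_getElem?_getD]
    congr 1
    rcases lt_or_gt_of_ne h2 with h4 | h4
    · rw [List.getElem?_append_left h4]
    · rw [List.getElem?_eq_none (by simp; omega), List.getElem?_eq_none (by omega)]

def pick (b : Bool) (X : Tab × Tab) : Tab := if b then X.1 else X.2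

def upd (b : Bool) (X : Tab × Tab) (T : Tab) : Tab × Tab := if b then (T, X.2) else (X.1, T)

theorem pick_upd (b b' : Bool) (X : Tab × Tab) (T : Tab) :
    pick b' (upd b X T) = if b' = b then T else pick b' X := by
  cases b <;> cases b' <;> simp [pick, upd]

def Bof : List (Bool × ℕ) → Tab × Tab
  | [] => ([], [])
  | i :: l => upd i.1 (Bof l) (place (l.length + 1) (i.2, 0) (pick i.1 (Bof l)))

/-- the recording bitableau as a function -/
def Gf : List (Bool × ℕ) → (Bool × ℕ) → List ℕ
  | [] => fun _ => []
  | i :: l => Function.update (Gf l) i (Gf l i ++ [l.length + 1])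

theorem Gf_length : ∀ l p, (Gf l p).length = (l : Sh).count p
  | [], p => by simp [Gf]
  | i :: l, p => by
    have h := Gf_length l
    rw [← Multiset.cons_coe, Multiset.count_cons, ← h p, Gf, Function.update_apply]
    split_ifs with e
    · simp [e]
    · simp

theorem Gf_le : ∀ l p x, x ∈ Gf l p → x ≤ l.length
  | [], p, x, h => by simp [Gf] at h
  | i :: l, p, x, h => by
    have h' := Gf_le l
    rw [Gf, Function.update_apply] at h
    rw [List.length_cons]
    split_ifs at h with e
    · rw [List.mem_append] at h
      rcases h with h | h
      · have := h' _ _ h; omega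
      · simp at h; omega
    · have := h' _ _ h; omega

theorem Gf_inj : ∀ l l', l.length = l'.length → Gf l = Gf l' → l = l'
  | [], [], _, _ => rfl
  | [], _ :: _, h, _ => by simp at h
  | _ :: _, [], h, _ => by simp at h
  | i :: l, j :: l', hl, h => by
    have hl' : l.length = l'.length := by simpa using hl
    have hij : i = j := by
      by_contra hne
      have h1 := congrFun h i
      rw [Gf, Gf, Function.update_self, Function.update_of_ne hne] at h1
      have h2 : l.length + 1 ∈ Gf l' i := by rw [← h1]; simp
      have := Gf_le _ _ _ h2
      omega
    subst hij
    have : Gf l = Gf l' := by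
      funext p
      have h1 := congrFun h p
      rw [Gf, Gf, Function.update_apply, Function.update_apply] at h1
      split_ifs at h1 with e
      · rw [hl'] at h1
        rw [e]
        exact List.append_cancel_right h1
      · exact h1
    rw [Gf_inj l l' hl' this]

theorem Bof_Gf : ∀ l, ValidR l → ∀ b r, (pick b (Bof l)).getD r [] = Gf l (b, r)
  | [], _, b, r => by cases b <;> simp [pick, Bof, Gf]
  | (c, s) :: l, h, b, r => by
    have ih := Bof_Gf l h.1
    have hs : s ≤ (pick c (Bof l)).length := by
      cases s with
      | zero => simp
      | succ s =>
        have h2 := h.2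
        rw [mem_addC_succ, ← Gf_length, ← Gf_length, ← ih c s] at h2
        by_contra hc
        rw [List.getD_eq_default _ _ (by omega)] at h2
        simp at h2
    rw [Bof, pick_upd, Gf, Function.update_apply]
    simp only
    by_cases e : b = c
    · subst e
      rw [if_pos rfl, place_getD _ _ _ _ hs, ih, ih]
      simp
    · rw [if_neg e, ih]
      simp [e]

theorem Bof_inj (l l' : List (Bool × ℕ)) (h : ValidR l) (h' : ValidR l')
    (hl : l.length = l'.length) (e : Bof l = Bof l') : l = l' := by
  apply Gf_inj _ _ hl
  funext ⟨b, r⟩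
  rw [← Bof_Gf l h, ← Bof_Gf l' h', e]

/-! ### The path of `π` -/

def sgn (π : P) (i : ℕ) : Bool := decide (0 < π (i : ℤ))

theorem RSstep_eq (π : P) (st : (Tab × Tab) × (Tab × Tab)) (i : ℕ) :
    RSstep π st i =
      (upd (sgn π i) st.1 (insTab (π i).natAbs (pick (sgn π i) st.1)).1,
       upd (sgn π i) st.2 (place i ((insTab (π i).natAbs (pick (sgn π i) st.1)).2.1, 0)
          (pick (sgn π i) st.2))) := by
  unfold RSstep sgn
  by_cases h : 0 < π (i : ℤ)
  · simp [h, upd, pick, place]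
  · simp [h, upd, pick, place]

theorem RSfull_succ (k : ℕ) (π : P) : RSfull (k + 1) π = RSstep π (RSfull k π) (k + 1) := by
  unfold RSfull
  rw [List.range_succ, List.map_append]
  beta_reduce
  rw [List.foldl_append]
  rfl

def pathOf (π : P) : ℕ → List (Bool × ℕ)
  | 0 => []
  | k + 1 => (sgn π (k + 1), (insTab (π ((k + 1 : ℕ) : ℤ)).natAbs
      (pick (sgn π (k + 1)) (RSfull k π).1)).2.1) :: pathOf π k

theorem pathOf_length (π : P) : ∀ k, (pathOf π k).length = k
  | 0 => rfl
  | k + 1 => by rw [pathOf, List.length_cons, pathOf_length π k]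

theorem RSfull_std (π : P) : ∀ k b, StdT (pick b (RSfull k π).1)
  | 0, b => by cases b <;> trivial
  | k + 1, b => by
    rw [RSfull_succ, RSstep_eq]
    simp only [pick_upd]
    split_ifs with h
    · exact insTab_std _ _ (RSfull_std π k _)
    · exact RSfull_std π k b

theorem pathOf_count (π : P) : ∀ k b r, (pathOf π k : Sh).count (b, r) =
    ((pick b (RSfull k π).1).getD r []).length
  | 0, b, r => by cases b <;> simp [pathOf, RSfull, pick]
  | k + 1, b, r => by
    have ih := pathOf_count π k
    rw [RSfull_succ, RSstep_eq, pathOf]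
    simp only [pick_upd]
    rw [← Multiset.cons_coe, Multiset.count_cons, ih]
    by_cases e : b = sgn π (k + 1)
    · subst e
      rw [if_pos rfl, insTab_shape]
      simp
    · rw [if_neg e, if_neg (by simp [e])]
      simp

theorem pathOf_valid (π : P) : ∀ k, ValidR (pathOf π k)
  | 0 => trivial
  | k + 1 => by
    refine ⟨pathOf_valid π k, ?_⟩
    set b := sgn π (k + 1) with hb
    set T := pick b (RSfull k π).1 with hT
    set x := (π ((k + 1 : ℕ) : ℤ)).natAbs
    cases hr : (insTab x T).2.1 with
    | zero => exact mem_addC_zero _ _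
    | succ r =>
      rw [mem_addC_succ, pathOf_count, pathOf_count, ← hT]
      have h1 := insTab_shape T x r
      have h2 := insTab_shape T x (r + 1)
      have h3 := (insTab_std T x (RSfull_std π k b)).anti r
      rw [hr] at h1 h2
      simp at h1 h2
      simp only [List.getD_eq_getElem?_getD] at *
      omega

theorem Btab_path (π : P) : ∀ k, Btab k π = Bof (pathOf π k)
  | 0 => rfl
  | k + 1 => by
    have ih := Btab_path π k
    unfold Btab at *
    rw [RSfull_succ, RSstep_eq, pathOf, Bof, ← ih, pathOf_length]
end RSC

namespace RSC

theorem StdT.col_lt : ∀ (rest : Tab) (row : List ℕ), StdT (row :: rest) → ∀ row' ∈ rest,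
    ∀ (j y : ℕ), row'[j]? = some y → ∃ z, row[j]? = some z ∧ z < y
  | [], row, _, row', h, _, _, _ => by simp at h
  | r :: rest, row, hT, row', h, j, y, hy => by
    have hab : Above row r := hT.2.1
    rw [List.mem_cons] at h
    rcases h with rfl | h
    · exact hab.get hy
    · obtain ⟨z, hz, hzy⟩ := StdT.col_lt rest r hT.2.2 row' h j y hy
      obtain ⟨z', hz', hzz⟩ := hab.get hz
      exact ⟨z', hz', by omega⟩

theorem insRow_col (x : ℕ) : ∀ (row : List ℕ) (c : ℕ),
    (∀ j y, row[j]? = some y → j < c → y < x) → (∀ j y, row[j]? = some y → c ≤ j → x < y) →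
    (row.length ≤ c → insRow x row = (row ++ [x], none)) ∧
    (∀ b, row[c]? = some b → insRow x row = (row.set c x, some b))
  | [], c, _, _ => by simp [insRow]
  | a :: t, 0, _, h2 => by
    have := h2 0 a (by simp) (le_refl _)
    simp [insRow_cons, this]
  | a :: t, c + 1, h1, h2 => by
    have ha := h1 0 a (by simp) (by omega)
    have ih := insRow_col x t c (fun j y hy hj => h1 (j + 1) y (by simpa using hy) (by omega))
      (fun j y hy hj => h2 (j + 1) y (by simpa using hy) (by omega))
    rw [insRow_cons, if_neg (by omega)]
    constructor
    · intro h
      rw [ih.1 (by simpa using h)]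
      simp
    · intro b hb
      rw [ih.2 b (by simpa using hb)]
      simp

theorem sorted_get (row : List ℕ) (h : row.Pairwise (· ≤ ·)) (i j a b : ℕ) (hij : i ≤ j)
    (ha : row[i]? = some a) (hb : row[j]? = some b) : a ≤ b := by
  rw [List.getElem?_eq_some_iff] at ha hb
  obtain ⟨h1, rfl⟩ := ha
  obtain ⟨h2, rfl⟩ := hb
  rcases Nat.lt_or_ge i j with h3 | h3
  · exact (List.pairwise_iff_getElem.mp h) i j h1 h2 h3
  · have : i = j := by omega
    subst this
    exact le_refl _

theorem insTab_col (c : ℕ) : ∀ (T : Tab) (x r : ℕ), StdT T →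
    (∀ row ∈ T, ∀ j y, row[j]? = some y → j < c → y < x) →
    (∀ row ∈ T, ∀ j y, row[j]? = some y → c ≤ j → x < y) →
    (T.getD r []).length = c → (∀ r' < r, c < (T.getD r' []).length) →
    (insTab x T).2.1 = r ∧ ∀ row ∈ (insTab x T).1, ∀ j y, row[j]? = some y →
      (j = c ∧ y = x) ∨ ∃ row' ∈ T, row'[j]? = some y
  | [], x, r, _, _, _, hc, hr => by
    have hr0 : r = 0 := by
      by_contra h
      have := hr 0 (by omega)
      simp at this
    subst hr0
    simp at hc
    subst hc
    refine ⟨rfl, ?_⟩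
    intro row hrow j y hy
    simp only [insTab, List.mem_singleton] at hrow
    subst hrow
    left
    cases j with
    | zero => simpa using hy.symm
    | succ j => simp at hy
  | row :: rest, x, 0, hT, h1, h2, hc, hr => by
    have hi := (insRow_col x row c (h1 row (by simp)) (h2 row (by simp))).1
      (by simp at hc; omega)
    rw [insTab_none _ _ _ (by rw [hi]), hi]
    refine ⟨rfl, ?_⟩
    intro row' hrow' j y hy
    simp only [List.mem_cons] at hrow'
    rcases hrow' with rfl | h
    · simp only [List.getD_cons_zero] at hc
      rcases Nat.lt_or_ge j row.length with hj | hj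
      · rw [List.getElem?_append_left hj] at hy
        exact Or.inr ⟨row, by simp, hy⟩
      · rw [List.getElem?_append_right hj] at hy
        left
        rw [List.getElem?_singleton] at hy
        split_ifs at hy with h0
        simp only [Option.some.injEq] at hy
        exact ⟨by omega, hy.symm⟩
    · exact Or.inr ⟨row', by simp [h], hy⟩
  | row :: rest, x, r + 1, hT, h1, h2, hc, hr => by
    have hlen : c < row.length := by
      have := hr 0 (by omega)
      simpa using this
    obtain ⟨b, hb⟩ : ∃ b, row[c]? = some b := ⟨row[c], by simp [hlen]⟩
    have hi := (insRow_col x row c (h1 row (by simp)) (h2 row (by simp))).2 b hb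
    have hxb : x < b := h2 row (by simp) c b hb (le_refl _)
    rw [insTab_some _ _ _ _ (by rw [hi]), hi]
    have ih := insTab_col c rest b r hT.2.2
      (fun row' h' j y hy hj => lt_trans (h1 row' (by simp [h']) j y hy hj) hxb)
      (fun row' h' j y hy hj => by
        obtain ⟨z, hz, hzy⟩ := StdT.col_lt rest row hT row' h' j y hy
        have := sorted_get row hT.1 c j b z hj hb hz
        omega)
      (by simpa using hc)
      (fun r' hr' => by simpa using hr (r' + 1) (by omega))
    refine ⟨by simp [ih.1], ?_⟩
    intro row' hrow' j y hy
    simp only [List.mem_cons] at hrow'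
    rcases hrow' with rfl | h
    · rw [List.getElem?_set] at hy
      split_ifs at hy with e
      · simp only [Option.some.injEq] at hy
        exact Or.inl ⟨e.symm, hy.symm⟩
      · exact Or.inr ⟨row, by simp, hy⟩
    · rcases ih.2 row' h j y hy with ⟨rfl, rfl⟩ | ⟨r2, hr2, hy2⟩
      · exact Or.inr ⟨row, by simp, hb⟩
      · exact Or.inr ⟨r2, by simp [hr2], hy2⟩

theorem exists_rank (n : ℕ) (κ : ℕ → ℕ)
    (hκ : ∀ i ∈ Finset.Icc 1 n, ∀ j ∈ Finset.Icc 1 n, κ i = κ j → i = j) :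
    ∃ v : Equiv.Perm ℕ, (∀ i, i ∉ Finset.Icc 1 n → v i = i) ∧
      (∀ i ∈ Finset.Icc 1 n, ∀ j ∈ Finset.Icc 1 n, κ i < κ j → v i < v j) := by
  let g : ℕ → ℕ := fun i => ((Finset.Icc 1 n).filter (fun j => κ j ≤ κ i)).card
  let f : ℕ → ℕ := fun i => if i ∈ Finset.Icc 1 n then g i else i
  have hmono : ∀ i ∈ Finset.Icc 1 n, ∀ j ∈ Finset.Icc 1 n, κ i < κ j → g i < g j := by
    intro i hi j hj h
    apply Finset.card_lt_card
    rw [Finset.ssubset_iff_of_subset]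
    · refine ⟨j, ?_, ?_⟩
      · rw [Finset.mem_filter]; exact ⟨hj, le_refl _⟩
      · rw [Finset.mem_filter]; rintro ⟨_, h'⟩; omega
    · intro a
      simp only [Finset.mem_filter]
      rintro ⟨h1, h2⟩
      exact ⟨h1, by omega⟩
  have hg : ∀ i ∈ Finset.Icc 1 n, g i ∈ Finset.Icc 1 n := by
    intro i hi
    rw [Finset.mem_Icc]
    constructor
    · apply Finset.card_pos.mpr
      exact ⟨i, by rw [Finset.mem_filter]; exact ⟨hi, le_refl _⟩⟩
    · calc g i ≤ (Finset.Icc 1 n).card := Finset.card_filter_le _ _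
        _ = n := by simp
  have hginj : Set.InjOn g (Finset.Icc 1 n : Finset ℕ) := by
    intro i hi j hj h
    by_contra hne
    have h3 : κ i ≠ κ j := fun h' => hne (hκ i hi j hj h')
    rcases lt_or_gt_of_ne h3 with h4 | h4
    · have := hmono i hi j hj h4; omega
    · have := hmono j hj i hi h4; omega
  have hinj : Function.Injective f := by
    intro i j h
    simp only [f] at h
    split_ifs at h with h1 h2 h2
    · exact hginj h1 h2 h
    · exact absurd (h ▸ hg i h1) h2
    · exact absurd (h ▸ hg j h2) h1
    · exact h
  have hsurj : Function.Surjective f := by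
    intro y
    by_cases hy : y ∈ Finset.Icc 1 n
    · have := Finset.surjOn_of_injOn_of_card_le (s := Finset.Icc 1 n) (t := Finset.Icc 1 n) g
        (fun i hi => hg i hi) hginj (le_refl _)
      obtain ⟨i, hi, rfl⟩ := this hy
      have hi' : i ∈ Finset.Icc 1 n := hi
      exact ⟨i, by simp only [f]; rw [if_pos hi']⟩
    · exact ⟨y, by simp only [f]; rw [if_neg hy]⟩
  refine ⟨Equiv.ofBijective f ⟨hinj, hsurj⟩, ?_, ?_⟩
  · intro i hi
    change f i = i
    simp only [f]
    rw [if_neg hi]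
  · intro i hi j hj h
    change f i < f j
    simp only [f]
    rw [if_pos hi, if_pos hj]
    exact hmono i hi j hj h

theorem exists_perm (n : ℕ) (v : Equiv.Perm ℕ) (hv : ∀ i, i ∉ Finset.Icc 1 n → v i = i)
    (sg : ℕ → Bool) : ∃ π ∈ Wset n, ∀ i ∈ Finset.Icc 1 n,
      sgn π i = sg i ∧ (π (i : ℤ)).natAbs = v i := by
  have hv0 : v 0 = 0 := hv 0 (by simp)
  have hv1 : ∀ i, v i = 0 → i = 0 := fun i h => v.injective (h.trans hv0.symm)
  let σ : ℕ → ℤ := fun i => if i ∈ Finset.Icc 1 n ∧ sg i = false then -1 else 1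
  have hσ : ∀ i, σ i = 1 ∨ σ i = -1 := by
    intro i
    simp only [σ]
    split_ifs <;> simp
  let f : ℤ → ℤ := fun z => if 0 ≤ z then σ z.natAbs * v z.natAbs else - (σ z.natAbs * v z.natAbs)
  have hfabs : ∀ z, (f z).natAbs = v z.natAbs := by
    intro z
    simp only [f]
    rcases hσ z.natAbs with h | h <;> rw [h] <;> split_ifs <;> simp
  have hneg : ∀ z, f (-z) = - f z := by
    intro z
    simp only [f, Int.natAbs_neg]
    rcases lt_trichotomy z 0 with h | h | h
    · rw [if_pos (by omega), if_neg (by omega)]; simp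
    · subst h; simp [hv0]
    · rw [if_neg (by omega), if_pos (by omega)]
  have hinj : Function.Injective f := by
    intro a b h
    have h1 : a.natAbs = b.natAbs := v.injective (by rw [← hfabs, ← hfabs, h])
    rcases Int.natAbs_eq_natAbs_iff.mp h1 with h2 | h2
    · exact h2
    · rw [h2, hneg] at h
      have h3 : f b = 0 := by omega
      have h4 := hfabs b
      rw [h3] at h4
      have := hv1 _ h4.symm
      omega
  have hsurj : Function.Surjective f := by
    intro y
    have key : (f (v.symm y.natAbs)).natAbs = y.natAbs := by
      rw [hfabs]; simp
    rcases Int.natAbs_eq_natAbs_iff.mp key with h2 | h2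
    · exact ⟨_, h2⟩
    · refine ⟨-(v.symm y.natAbs : ℕ), ?_⟩
      rw [hneg, h2]; simp
  refine ⟨Equiv.ofBijective f ⟨hinj, hsurj⟩, ⟨hneg, ?_⟩, ?_⟩
  · intro i hi
    have h1 : i.natAbs ∉ Finset.Icc 1 n := by
      rw [Finset.mem_Icc]
      rw [Int.abs_eq_natAbs] at hi
      omega
    have h2 : σ i.natAbs = 1 := by
      simp only [σ]
      rw [if_neg (fun h => h1 h.1)]
    change f i = i
    simp only [f]
    rw [hv _ h1, h2]
    split_ifs <;> omega
  · intro i hi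
    refine ⟨?_, hfabs i⟩
    have hi' := hi
    rw [Finset.mem_Icc] at hi'
    have hpos : 0 < v i := Nat.pos_of_ne_zero (fun h => by have := hv1 i h; omega)
    have hfi : f i = σ i * v i := by
      simp only [f, Int.natAbs_natCast]
      rw [if_pos (by omega)]
    change decide (0 < f i) = sg i
    rw [hfi]
    by_cases hs : sg i = false
    · have : σ i = -1 := if_pos ⟨hi, hs⟩
      rw [this, hs]
      simp
    · have : σ i = 1 := if_neg (fun h => hs h.2)
      rw [this]
      rw [Bool.not_eq_false] at hs
      rw [hs]
      simpa using hpos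

theorem anti_lt {F : Sh} (hF : Anti F) (b : Bool) (r : ℕ) (h : (b, r) ∈ addC F) :
    ∀ r' < r, F.count (b, r) < F.count (b, r') := by
  have hA : Antitone (fun r => F.count (b, r)) := antitone_nat_of_succ_le (fun r => hF b r)
  intro r' hr'
  cases r with
  | zero => omega
  | succ r =>
    rw [mem_addC_succ] at h
    exact lt_of_lt_of_le h (hA (Nat.le_of_lt_succ hr'))

theorem exists_of_valid (l : List (Bool × ℕ)) (hl : ValidR l) :
    ∃ π ∈ Wset l.length, pathOf π l.length = l := by
  set n := l.length with hn
  let f : ℕ → List (Bool × ℕ) := fun k => l.drop (n - k)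
  let p : ℕ → Bool × ℕ := fun k => (f k).headD (true, 0)
  let col : ℕ → ℕ := fun k => (f (k - 1) : Sh).count (p k)
  have hf : ∀ k, k < n → f (k + 1) = p (k + 1) :: f k := by
    intro k hk
    have h1 : n - k = n - (k + 1) + 1 := by omega
    have h2 : n - (k + 1) < l.length := by omega
    simp only [f, p]
    rw [h1, List.drop_eq_getElem_cons h2]
    rfl
  have hvalid : ∀ (m : ℕ) (l : List (Bool × ℕ)), ValidR l → ValidR (l.drop m) := by
    intro m
    induction m with
    | zero => intro l h; simpa using h
    | succ m ih =>
      intro l h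
      cases l with
      | nil => simpa using h
      | cons a t => simpa using ih t h.1
  have hfv : ∀ k, ValidR (f k) := fun k => hvalid _ _ hl
  let κ : ℕ → ℕ := fun i => col i * (n + 1) + (n - i)
  have hκ1 : ∀ i j, i ≤ n → j ≤ n → col i < col j → κ i < κ j := by
    intro i j hi hj h
    simp only [κ]
    have : (col i + 1) * (n + 1) ≤ col j * (n + 1) := Nat.mul_le_mul_right _ h
    rw [Nat.add_mul] at this
    omega
  have hκ2 : ∀ i j, i ≤ n → j ≤ n → col i = col j → i < j → κ j < κ i := by
    intro i j hi hj h hij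
    simp only [κ]
    rw [h]
    omega
  obtain ⟨v, hv1, hv2⟩ := exists_rank n κ (by
    intro i hi j hj h
    rw [Finset.mem_Icc] at hi hj
    by_contra hne
    rcases lt_trichotomy (col i) (col j) with h1 | h1 | h1
    · have := hκ1 i j hi.2 hj.2 h1; omega
    · rcases lt_or_gt_of_ne hne with h2 | h2
      · have := hκ2 i j hi.2 hj.2 h1 h2; omega
      · have := hκ2 j i hj.2 hi.2 h1.symm h2; omega
    · have := hκ1 j i hj.2 hi.2 h1; omega)
  obtain ⟨π, hπ, hπ2⟩ := exists_perm n v hv1 (fun i => (p i).1)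
  refine ⟨π, hπ, ?_⟩
  have main : ∀ k, k ≤ n → pathOf π k = f k ∧ ∀ b, ∀ row ∈ pick b (RSfull k π).1, ∀ j y,
      row[j]? = some y → ∃ i, 1 ≤ i ∧ i ≤ k ∧ y = v i ∧ col i = j := by
    intro k
    induction k with
    | zero =>
      intro _
      refine ⟨by simp [pathOf, f, hn], ?_⟩
      intro b row hrow
      cases b <;> simp [RSfull, pick] at hrow
    | succ k ih =>
      intro hk
      obtain ⟨ih1, ih2⟩ := ih (by omega)
      have hmem : k + 1 ∈ Finset.Icc 1 n := by rw [Finset.mem_Icc]; omega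
      obtain ⟨hs, hx⟩ := hπ2 (k + 1) hmem
      have hfk := hf k (by omega)
      have hadd : p (k + 1) ∈ addC (f k : Sh) := by
        have := hfv (k + 1)
        rw [hfk] at this
        exact this.2
      have hcol : col (k + 1) = (f k : Sh).count (p (k + 1)) := by simp [col]
      obtain ⟨b, r, hp⟩ : ∃ b r, p (k + 1) = (b, r) := ⟨_, _, rfl⟩
      rw [hp] at hadd hcol
      simp only [hp] at hs
      have hcnt : ∀ r', ((pick b (RSfull k π).1).getD r' []).length = (f k : Sh).count (b, r') := by
        intro r'
        rw [← ih1, pathOf_count]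
      have key := insTab_col (col (k + 1)) (pick b (RSfull k π).1) (v (k + 1)) r
        (RSfull_std π k b)
        (fun row hrow j y hy hj => by
          obtain ⟨i, h1, h2, rfl, h4⟩ := ih2 b row hrow j y hy
          apply hv2 i (by rw [Finset.mem_Icc]; omega) _ hmem
          exact hκ1 _ _ (by omega) (by omega) (by omega))
        (fun row hrow j y hy hj => by
          obtain ⟨i, h1, h2, rfl, h4⟩ := ih2 b row hrow j y hy
          apply hv2 _ hmem i (by rw [Finset.mem_Icc]; omega)
          rcases Nat.lt_or_ge (col (k + 1)) (col i) with h5 | h5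
          · exact hκ1 _ _ (by omega) (by omega) h5
          · exact hκ2 _ _ (by omega) (by omega) (by omega) (by omega))
        (by rw [hcnt, hcol])
        (fun r' hr' => by
          rw [hcnt, hcol]
          exact anti_lt (hfv k).anti b r hadd r' hr')
      constructor
      · rw [pathOf, hs, hx, key.1, ih1, hfk, hp]
      · intro b' row hrow j y hy
        rw [RSfull_succ, RSstep_eq, hs, hx] at hrow
        simp only [pick_upd] at hrow
        split_ifs at hrow with hb
        · rcases key.2 row hrow j y hy with ⟨h1, h2⟩ | ⟨row', h1, h2⟩
          · exact ⟨k + 1, by omega, by omega, h2, h1.symm⟩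
          · obtain ⟨i, h3, h4, h5⟩ := ih2 b row' h1 j y h2
            exact ⟨i, h3, by omega, h5⟩
        · obtain ⟨i, h3, h4, h5⟩ := ih2 b' row hrow j y hy
          exact ⟨i, h3, by omega, h5⟩
  rw [(main n (le_refl _)).1]
  simp [f]

theorem card_cells (n : ℕ) : (Btab n '' Wset n).ncard = aSeq n := by
  have h : Btab n '' Wset n = ((Rset n).image Bof : Finset (Tab × Tab)) := by
    ext B
    simp only [Set.mem_image, Finset.coe_image, Finset.mem_coe, mem_Rset]
    constructor
    · rintro ⟨π, hπ, rfl⟩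
      exact ⟨pathOf π n, ⟨pathOf_length π n, pathOf_valid π n⟩, (Btab_path π n).symm⟩
    · rintro ⟨l, ⟨rfl, h2⟩, rfl⟩
      obtain ⟨π, hπ, hp⟩ := exists_of_valid l h2
      exact ⟨π, hπ, by rw [Btab_path, hp]⟩
  rw [h, Set.ncard_coe_finset, Finset.card_image_of_injOn, card_Rset]
  intro l hl l' hl' e
  rw [Finset.mem_coe, mem_Rset] at hl hl'
  exact Bof_inj l l' hl.2 hl'.2 (by omega) e
end RSC

/-- The number of generalized Robinson–Schensted cells of `W_n`
(the number of distinct values of `π ↦ B_n(π)` on `W_n`) equals the number of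
involutions (elements `w` with `w² = 1`) of `W_n`. -/
theorem card_RS_cells_eq_card_involutions (n : ℕ) (hn : 1 ≤ n) :
    (Btab n '' Wset n).ncard = {w ∈ Wset n | w * w = 1}.ncard := by
  rw [RSC.card_cells, RSC.card_inv]
end
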